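/- arXiv:1403.5341 — 7 statements merged into one kernel-verified Lean document; each statement's English description precedes it below -/
import Mathlib

section
/- I(A*; (A, Y_A)) = Σ_{a∈𝒜} ℙ(A = a) · I(A*; Y_a) = Σ_{a,a*∈𝒜} ℙ(A* = a) ℙ(A* = a*) · D( P(Y_a | A* = a*) ‖ P(Y_a) ), where in the last sum any term with ℙ(A* = a*) = 0 is interpreted as zero. -/
open MeasureTheory ProbabilityTheory Real

/-- Mutual information between two finitely-valued random variables `X` and `Z`
under the measure `μ`: the Kullback--Leibler divergence between the joint law
of `(X, Z)` and the product of the marginal laws. -/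
noncomputable def mutualInfo {Ω : Type*} [MeasurableSpace Ω] (μ : Measure Ω)
    {𝒳 𝒵 : Type*} [Fintype 𝒳] [Fintype 𝒵] (X : Ω → 𝒳) (Z : Ω → 𝒵) : ℝ :=
  ∑ x : 𝒳, ∑ z : 𝒵,
    (μ {ω | X ω = x ∧ Z ω = z}).toReal *
      Real.log ((μ {ω | X ω = x ∧ Z ω = z}).toReal /
        ((μ {ω | X ω = x}).toReal * (μ {ω | Z ω = z}).toReal))

/-- Kullback--Leibler divergence between two probability mass functions `p` and
`q` on a finite set (terms with `p y = 0` vanish). -/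
noncomputable def klFin {𝒴 : Type*} [Fintype 𝒴] (p q : 𝒴 → ℝ) : ℝ :=
  ∑ y : 𝒴, p y * Real.log (p y / q y)

/-- **Proposition 2, first identity.** Under Thompson sampling (the action `A`
is independent of `(A*, Y)` and has the same distribution as the optimal action
`A*`), the mutual information between `A*` and `(A, Y_A)` equals
`Σ_a ℙ(A = a) I(A*; Y_a)`, which in turn equals
`Σ_{a,a*} ℙ(A* = a) ℙ(A* = a*) D(P(Y_a | A* = a*) ‖ P(Y_a))`. -/
theorem mutualInfo_action_observation_eq
    {Ω : Type*} [MeasurableSpace Ω] (μ : Measure Ω) [IsProbabilityMeasure μ]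
    {𝒜 𝒴 : Type*} [Fintype 𝒜] [Nonempty 𝒜] [Fintype 𝒴]
    [MeasurableSpace 𝒜] [MeasurableSingletonClass 𝒜]
    [MeasurableSpace 𝒴] [MeasurableSingletonClass 𝒴]
    (Y : 𝒜 → Ω → 𝒴) (Astar A : Ω → 𝒜)
    (hYmeas : ∀ a, Measurable (Y a)) (hAstarMeas : Measurable Astar)
    (hAMeas : Measurable A)
    (hmatch : ∀ a : 𝒜, μ {ω | A ω = a} = μ {ω | Astar ω = a})
    (hindep : IndepFun A (fun ω => (Astar ω, fun a => Y a ω)) μ) :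
    mutualInfo μ Astar (fun ω => (A ω, Y (A ω) ω)) =
        ∑ a : 𝒜, (μ {ω | A ω = a}).toReal * mutualInfo μ Astar (Y a) ∧
    mutualInfo μ Astar (fun ω => (A ω, Y (A ω) ω)) =
        ∑ a : 𝒜, ∑ astar : 𝒜,
          (μ {ω | Astar ω = a}).toReal * (μ {ω | Astar ω = astar}).toReal *
            klFin (fun y => ((μ[|{ω | Astar ω = astar}]) {ω | Y a ω = y}).toReal)
              (fun y => (μ {ω | Y a ω = y}).toReal) := by
  have hindS : ∀ (a : 𝒜) (S : Set (𝒜 × (𝒜 → 𝒴))), MeasurableSet S →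
      (μ {ω | A ω = a ∧ (Astar ω, fun b => Y b ω) ∈ S}).toReal =
        (μ {ω | A ω = a}).toReal * (μ {ω | (Astar ω, fun b => Y b ω) ∈ S}).toReal := by
    intro a S hS
    have h := hindep.measure_inter_preimage_eq_mul {a} S (measurableSet_singleton a) hS
    rw [← ENNReal.toReal_mul]
    exact congrArg ENNReal.toReal h
  have hjoint : ∀ x a y, (μ {ω | Astar ω = x ∧ (A ω, Y (A ω) ω) = (a, y)}).toReal =
      (μ {ω | A ω = a}).toReal * (μ {ω | Astar ω = x ∧ Y a ω = y}).toReal := by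
    intro x a y
    have hS : MeasurableSet {p : 𝒜 × (𝒜 → 𝒴) | p.1 = x ∧ p.2 a = y} := by
      apply MeasurableSet.inter
      · exact measurable_fst (measurableSet_singleton x)
      · have hm : Measurable (fun p : 𝒜 × (𝒜 → 𝒴) => p.2 a) := by fun_prop
        exact hm (measurableSet_singleton y)
    have h := hindS a _ hS
    refine Eq.trans (congrArg (fun s => (μ s).toReal) ?_) h
    ext ω
    simp only [Set.mem_ofPred_eq, Prod.mk.injEq]
    constructor
    · rintro ⟨h1, rfl, h3⟩
      exact ⟨rfl, h1, h3⟩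
    · rintro ⟨rfl, h1, h3⟩
      exact ⟨h1, rfl, h3⟩
  have hmarg : ∀ a y, (μ {ω | (A ω, Y (A ω) ω) = (a, y)}).toReal =
      (μ {ω | A ω = a}).toReal * (μ {ω | Y a ω = y}).toReal := by
    intro a y
    have hS : MeasurableSet {p : 𝒜 × (𝒜 → 𝒴) | p.2 a = y} := by
      have hm : Measurable (fun p : 𝒜 × (𝒜 → 𝒴) => p.2 a) := by fun_prop
      exact hm (measurableSet_singleton y)
    have h := hindS a _ hS
    refine Eq.trans (congrArg (fun s => (μ s).toReal) ?_) h
    ext ω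
    simp only [Set.mem_ofPred_eq, Prod.mk.injEq]
    constructor
    · rintro ⟨rfl, h3⟩
      exact ⟨rfl, h3⟩
    · rintro ⟨rfl, h3⟩
      exact ⟨rfl, h3⟩
  have h1 : mutualInfo μ Astar (fun ω => (A ω, Y (A ω) ω)) =
        ∑ a : 𝒜, (μ {ω | A ω = a}).toReal * mutualInfo μ Astar (Y a) := by
    unfold mutualInfo
    simp_rw [Fintype.sum_prod_type, Finset.mul_sum]
    rw [Finset.sum_comm]
    refine Finset.sum_congr rfl fun a _ => Finset.sum_congr rfl fun x _ =>
      Finset.sum_congr rfl fun y _ => ?_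
    rw [hjoint, hmarg]
    by_cases hp : (μ {ω | A ω = a}).toReal = 0
    · simp [hp]
    · rw [mul_left_comm (μ {ω | Astar ω = x}).toReal, mul_div_mul_left _ _ hp, mul_assoc]
  refine ⟨h1, h1.trans ?_⟩
  refine Finset.sum_congr rfl fun a _ => ?_
  unfold mutualInfo klFin
  rw [hmatch a, Finset.mul_sum]
  refine Finset.sum_congr rfl fun x _ => ?_
  rw [mul_assoc]
  congr 1
  rw [Finset.mul_sum]
  refine Finset.sum_congr rfl fun y _ => ?_
  have hc : ((μ[|{ω | Astar ω = x}]) {ω | Y a ω = y}).toReal =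
      (μ {ω | Astar ω = x}).toReal⁻¹ * (μ {ω | Astar ω = x ∧ Y a ω = y}).toReal := by
    have hm : MeasurableSet {ω | Astar ω = x} := hAstarMeas (measurableSet_singleton x)
    rw [cond_apply hm, ENNReal.toReal_mul,
      ENNReal.toReal_inv]
    rfl
  beta_reduce
  rw [hc]
  by_cases hp : (μ {ω | Astar ω = x}).toReal = 0
  · have hj : (μ {ω | Astar ω = x ∧ Y a ω = y}).toReal = 0 := by
      have h0 : μ {ω | Astar ω = x} = 0 := by
        simpa [ENNReal.toReal_eq_zero_iff] using hp
      rw [measure_mono_null (fun ω h => h.1) h0]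
      rfl
    simp [hj]
  · rw [← mul_assoc, mul_inv_cancel_left₀ hp, inv_mul_eq_div, div_div]
end

section
/- E[R(Y_{A*}) − R(Y_A)] = Σ_{a∈𝒜} ℙ(A* = a) · ( E[R(Y_a) | A* = a] − E[R(Y_a)] ), where any term with ℙ(A* = a) = 0 is interpreted as zero and Y_{A*} denotes the random variable ω ↦ Y_{A*(ω)}(ω). -/
open MeasureTheory ProbabilityTheory Real

/-- **Proposition 2, second identity** (expected-regret representation). Under
Thompson sampling (the action `A` is independent of `(A*, Y)` and has the same
distribution as the optimal action `A*`),
`E[R(Y_{A*}) − R(Y_A)] = Σ_a ℙ(A* = a) (E[R(Y_a) | A* = a] − E[R(Y_a)])`.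
Terms where `ℙ(A* = a) = 0` vanish (the conditional measure is then the zero
measure, so the corresponding integral is zero, and the term is multiplied by
zero in any case). -/
theorem expected_regret_eq
    {Ω : Type*} [MeasurableSpace Ω] (μ : Measure Ω) [IsProbabilityMeasure μ]
    {𝒜 𝒴 : Type*} [Fintype 𝒜] [Nonempty 𝒜] [Fintype 𝒴]
    [MeasurableSpace 𝒜] [MeasurableSingletonClass 𝒜]
    [MeasurableSpace 𝒴] [MeasurableSingletonClass 𝒴]
    (Y : 𝒜 → Ω → 𝒴) (Astar A : Ω → 𝒜) (R : 𝒴 → ℝ)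
    (hYmeas : ∀ a, Measurable (Y a)) (hAstarMeas : Measurable Astar)
    (hAMeas : Measurable A)
    (hmatch : ∀ a : 𝒜, μ {ω | A ω = a} = μ {ω | Astar ω = a})
    (hindep : IndepFun A (fun ω => (Astar ω, fun a => Y a ω)) μ) :
    ∫ ω, (R (Y (Astar ω) ω) - R (Y (A ω) ω)) ∂μ =
      ∑ a : 𝒜, (μ {ω | Astar ω = a}).toReal *
        ((∫ ω, R (Y a ω) ∂(μ[|{ω | Astar ω = a}])) - ∫ ω, R (Y a ω) ∂μ) := by
  classical
  have hR : Measurable R := measurable_of_finite R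
  have hRY : ∀ a, Measurable (fun ω => R (Y a ω)) := fun a => hR.comp (hYmeas a)
  have hint : ∀ a, Integrable (fun ω => R (Y a ω)) μ := by
    intro a
    refine Integrable.of_bound (hRY a).aestronglyMeasurable (∑ y, ‖R y‖) ?_
    refine Filter.Eventually.of_forall fun ω => ?_
    exact Finset.single_le_sum (f := fun y => ‖R y‖) (fun _ _ => norm_nonneg _)
      (Finset.mem_univ (Y a ω))
  have hset : ∀ B : Ω → 𝒜, Measurable B → ∀ a, MeasurableSet {ω | B ω = a} :=
    fun B hB a => hB (measurableSet_singleton a)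
  have hdec : ∀ B : Ω → 𝒜, (fun ω => R (Y (B ω) ω)) =
      fun ω => ∑ a, Set.indicator {ω | B ω = a} (fun ω => R (Y a ω)) ω := by
    intro B
    funext ω
    simp [Set.indicator_apply]
  have hI : ∀ B : Ω → 𝒜, Measurable B → Integrable (fun ω => R (Y (B ω) ω)) μ := by
    intro B hB
    rw [hdec B]
    exact integrable_finsetSum _ fun a _ => (hint a).indicator (hset B hB a)
  have hsum : ∀ B : Ω → 𝒜, Measurable B → ∫ ω, R (Y (B ω) ω) ∂μ =
      ∑ a, ∫ ω in {ω | B ω = a}, R (Y a ω) ∂μ := by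
    intro B hB
    rw [hdec B, integral_finsetSum _ fun a _ => (hint a).indicator (hset B hB a)]
    exact Finset.sum_congr rfl fun a _ => integral_indicator (hset B hB a)
  rw [integral_sub (hI _ hAstarMeas) (hI _ hAMeas), hsum _ hAstarMeas, hsum _ hAMeas,
    ← Finset.sum_sub_distrib]
  refine Finset.sum_congr rfl fun a _ => ?_
  rw [mul_sub]
  congr 1
  · rw [ProbabilityTheory.cond, integral_smul_measure, ENNReal.toReal_inv, smul_eq_mul]
    by_cases h : μ {ω | Astar ω = a} = 0
    · rw [Measure.restrict_eq_zero.mpr h]; simp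
    · rw [mul_inv_cancel_left₀ (ENNReal.toReal_ne_zero.mpr ⟨h, measure_ne_top _ _⟩)]
  · rw [← hmatch a, ← integral_indicator (hset A hAMeas a)]
    have hg : Measurable (fun b : 𝒜 => if b = a then (1:ℝ) else 0) := measurable_of_finite _
    have hind : IndepFun (fun ω => if A ω = a then (1:ℝ) else 0) (fun ω => R (Y a ω)) μ :=
      hindep.comp (φ := fun b : 𝒜 => if b = a then (1:ℝ) else 0)
        (ψ := fun p : 𝒜 × (𝒜 → 𝒴) => R (p.2 a)) hg
        (hR.comp ((measurable_pi_apply a).comp measurable_snd))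
    have h1 := hind.integral_fun_mul_eq_mul_integral
      (hg.comp hAMeas).aestronglyMeasurable (hRY a).aestronglyMeasurable
    have h2 : ∫ ω, (if A ω = a then (1:ℝ) else 0) ∂μ = (μ {ω | A ω = a}).toReal := by
      have := integral_indicator_one (μ := μ) (hset A hAMeas a)
      simpa [Set.indicator_apply, Measure.real] using this
    rw [h2] at h1
    rw [← h1]
    congr 1
    funext ω
    simp [Set.indicator_apply]
end

section
/- Assume sup_{y∈𝒴} R(y) − inf_{y∈𝒴} R(y) ≤ 1. Then ( E[R(Y_{A*}) − R(Y_A)] )² ≤ (|𝒜| / 2) · I(A*; (A, Y_A)), i.e. the information ratio of Thompson sampling is at most |𝒜|/2. -/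
open MeasureTheory ProbabilityTheory Real

lemma aux_hasDeriv (t : ℝ) (ht : 0 < t) :
    HasDerivAt (fun t : ℝ => Real.log t - (t - 1) * (5 * t + 1) / (2 * t * (t + 2)))
      ((t - 1) ^ 3 / (t ^ 2 * (t + 2) ^ 2)) t := by
  have h1 := Real.hasDerivAt_log ht.ne'
  have hid := hasDerivAt_id' t
  have hn := (hid.sub_const 1).mul ((hid.const_mul 5).add_const 1)
  have hd := (hid.const_mul 2).mul (hid.add_const 2)
  have hne : 2 * t * (t + 2) ≠ 0 := by positivity
  have := h1.sub (hn.div hd hne)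
  refine this.congr_deriv ?_
  have : t + 2 ≠ 0 := by positivity
  simp only [Pi.mul_apply]
  field_simp
  ring

lemma aux_log (t : ℝ) (ht : 0 < t) :
    (t - 1) * (5 * t + 1) / (2 * t * (t + 2)) ≤ Real.log t := by
  set F := (fun t : ℝ => Real.log t - (t - 1) * (5 * t + 1) / (2 * t * (t + 2))) with hF
  have h1 : F 1 = 0 := by simp [hF]
  suffices 0 ≤ F t by simp only [hF] at this; linarith
  rw [← h1]
  rcases le_total 1 t with h | h
  · have : MonotoneOn F (Set.Ici 1) := by
      apply monotoneOn_of_deriv_nonneg (convex_Ici 1)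
      · intro x hx
        exact (aux_hasDeriv x (lt_of_lt_of_le one_pos hx)).continuousAt.continuousWithinAt
      · intro x hx
        rw [interior_Ici] at hx
        exact (aux_hasDeriv x (lt_trans one_pos hx)).differentiableAt.differentiableWithinAt
      · intro x hx
        rw [interior_Ici] at hx
        rw [(aux_hasDeriv x (lt_trans one_pos hx)).deriv]
        have : 0 ≤ x - 1 := by have := Set.mem_Ioi.1 hx; linarith
        positivity
    exact this (Set.mem_Ici.2 le_rfl) h h
  · have : AntitoneOn F (Set.Ioc 0 1) := by
      apply antitoneOn_of_deriv_nonpos (convex_Ioc 0 1)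
      · intro x hx
        exact (aux_hasDeriv x hx.1).continuousAt.continuousWithinAt
      · intro x hx
        rw [interior_Ioc] at hx
        exact (aux_hasDeriv x hx.1).differentiableAt.differentiableWithinAt
      · intro x hx
        rw [interior_Ioc] at hx
        rw [(aux_hasDeriv x hx.1).deriv]
        apply div_nonpos_of_nonpos_of_nonneg
        · have : x - 1 ≤ 0 := by linarith [hx.2]
          exact Odd.pow_nonpos (by decide) this
        · positivity
    exact this ⟨ht, h⟩ ⟨one_pos, le_rfl⟩ h

lemma aux_pt (f g : ℝ) (hf : 0 ≤ f) (hg : 0 ≤ g) (h : g = 0 → f = 0) :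
    3 / 2 * ((f - g) ^ 2 / (f + 2 * g)) ≤ f * Real.log (f / g) - f + g := by
  rcases hg.eq_or_lt with h0 | hg
  · have := h h0.symm
    subst this; subst h0; simp
  rcases hf.eq_or_lt with h0 | hf
  · subst h0
    have : (0 - g) ^ 2 / (0 + 2 * g) = g / 2 := by field_simp; ring
    rw [this]; simp; linarith
  have := mul_le_mul_of_nonneg_left (aux_log (f / g) (by positivity)) hf.le
  have e : f * ((f / g - 1) * (5 * (f / g) + 1) / (2 * (f / g) * (f / g + 2)))
      = 3 / 2 * ((f - g) ^ 2 / (f + 2 * g)) + f - g := by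
    have : f + 2 * g ≠ 0 := by positivity
    have : f / g + 2 ≠ 0 := by positivity
    field_simp
    ring
  linarith

lemma aux_pinsker {ι : Type*} [Fintype ι] (f g R : ι → ℝ) (m c : ℝ)
    (hf : ∀ i, 0 ≤ f i) (hg : ∀ i, 0 ≤ g i) (h : ∀ i, g i = 0 → f i = 0)
    (hfm : ∑ i, f i = m) (hgm : ∑ i, g i = m) (hR : ∀ i, |R i - c| ≤ 1 / 2) :
    0 ≤ ∑ i, f i * Real.log (f i / g i) ∧
    2 * (∑ i, R i * (f i - g i)) ^ 2 ≤ m * ∑ i, f i * Real.log (f i / g i) := by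
  have hD : 3 / 2 * ∑ i, (f i - g i) ^ 2 / (f i + 2 * g i) ≤
      ∑ i, f i * Real.log (f i / g i) := by
    have := Finset.sum_le_sum (fun i (_ : i ∈ Finset.univ) =>
      aux_pt (f i) (g i) (hf i) (hg i) (h i))
    rw [Finset.sum_add_distrib, Finset.sum_sub_distrib, hfm, hgm, ← Finset.mul_sum] at this
    linarith
  have hS : 0 ≤ ∑ i, (f i - g i) ^ 2 / (f i + 2 * g i) :=
    Finset.sum_nonneg fun i _ => div_nonneg (sq_nonneg _) (by linarith [hf i, hg i])
  have hm : 0 ≤ m := hfm ▸ Finset.sum_nonneg fun i _ => hf i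
  refine ⟨by linarith, ?_⟩
  have hCS : (∑ i, |f i - g i|) ^ 2 ≤
      (∑ i, (f i - g i) ^ 2 / (f i + 2 * g i)) * ∑ i, (f i + 2 * g i) := by
    apply Finset.sum_sq_le_sum_mul_sum_of_sq_le_mul
    · intro i _; exact div_nonneg (sq_nonneg _) (by linarith [hf i, hg i])
    · intro i _; linarith [hf i, hg i]
    · intro i _
      rw [sq_abs]
      by_cases h0 : f i + 2 * g i = 0
      · have : g i = 0 := by linarith [hf i, hg i]
        have : f i = 0 := by linarith [hf i, hg i]
        simp [*]
      · rw [div_mul_cancel₀ _ h0]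
  have e : ∑ i, (f i + 2 * g i) = 3 * m := by
    rw [Finset.sum_add_distrib, ← Finset.mul_sum, hfm, hgm]; ring
  rw [e] at hCS
  have hd : |∑ i, R i * (f i - g i)| ≤ 1 / 2 * ∑ i, |f i - g i| := by
    have : ∑ i, R i * (f i - g i) = ∑ i, (R i - c) * (f i - g i) := by
      simp only [sub_mul, Finset.sum_sub_distrib, ← Finset.mul_sum]
      rw [hfm, hgm]; ring
    rw [this, Finset.mul_sum]
    refine (Finset.abs_sum_le_sum_abs _ _).trans (Finset.sum_le_sum fun i _ => ?_)
    rw [abs_mul]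
    exact mul_le_mul_of_nonneg_right (hR i) (abs_nonneg _)
  have h2 := pow_le_pow_left₀ (abs_nonneg _) hd 2
  rw [sq_abs, mul_pow] at h2
  have := mul_le_mul_of_nonneg_left hD hm
  nlinarith

lemma aux_integral {Ω ι : Type*} [MeasurableSpace Ω] (μ : Measure Ω) [IsProbabilityMeasure μ]
    [Fintype ι] [MeasurableSpace ι] [MeasurableSingletonClass ι] (Z : Ω → ι) (hZ : Measurable Z)
    (F : ι → ℝ) : ∫ ω, F (Z ω) ∂μ = ∑ z, (μ {ω | Z ω = z}).toReal * F z := by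
  have hF : Measurable F := measurable_of_finite F
  have : IsProbabilityMeasure (μ.map Z) := Measure.isProbabilityMeasure_map hZ.aemeasurable
  rw [← integral_map (f := F) hZ.aemeasurable hF.aestronglyMeasurable,
    integral_fintype .of_finite]
  refine Finset.sum_congr rfl fun z _ => ?_
  rw [Measure.real, Measure.map_apply hZ (measurableSet_singleton z)]
  rfl

lemma aux_sum {Ω ι : Type*} [MeasurableSpace Ω] (μ : Measure Ω) [IsProbabilityMeasure μ]
    [Fintype ι] [MeasurableSpace ι] [MeasurableSingletonClass ι] (Z : Ω → ι) (hZ : Measurable Z)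
    (S : Set Ω) :
    ∑ z, (μ {ω | Z ω = z ∧ ω ∈ S}).toReal = (μ S).toReal := by
  have h := sum_measureReal_preimage_singleton (μ := μ.restrict S) (f := Z) Finset.univ
    (fun y _ => hZ (measurableSet_singleton y))
  simp only [Finset.coe_univ, Set.preimage_univ, measureReal_restrict_apply_univ] at h
  change _ = μ.real S
  rw [← h]
  refine Finset.sum_congr rfl fun z _ => ?_
  rw [measureReal_restrict_apply (hZ (measurableSet_singleton z))]
  rfl

/-- **Proposition 3** (worst-case bound on the information ratio). If rewards
have range of width at most one, then under Thompson sampling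
`(E[R(Y_{A*}) − R(Y_A)])² ≤ (|𝒜|/2) · I(A*; (A, Y_A))`. -/
theorem information_ratio_le_card_div_two
    {Ω : Type*} [MeasurableSpace Ω] (μ : Measure Ω) [IsProbabilityMeasure μ]
    {𝒜 𝒴 : Type*} [Fintype 𝒜] [Nonempty 𝒜] [Fintype 𝒴] [Nonempty 𝒴]
    [MeasurableSpace 𝒜] [MeasurableSingletonClass 𝒜]
    [MeasurableSpace 𝒴] [MeasurableSingletonClass 𝒴]
    (Y : 𝒜 → Ω → 𝒴) (Astar A : Ω → 𝒜) (R : 𝒴 → ℝ)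
    (hR : (⨆ y, R y) - (⨅ y, R y) ≤ 1)
    (hYmeas : ∀ a, Measurable (Y a)) (hAstarMeas : Measurable Astar)
    (hAMeas : Measurable A)
    (hmatch : ∀ a : 𝒜, μ {ω | A ω = a} = μ {ω | Astar ω = a})
    (hindep : IndepFun A (fun ω => (Astar ω, fun a => Y a ω)) μ) :
    (∫ ω, (R (Y (Astar ω) ω) - R (Y (A ω) ω)) ∂μ) ^ 2 ≤
      ((Fintype.card 𝒜 : ℝ) / 2) *
        mutualInfo μ Astar (fun ω => (A ω, Y (A ω) ω)) := by
  classical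
  -- measurability
  have hYA : ∀ B : Ω → 𝒜, Measurable B → Measurable (fun ω => Y (B ω) ω) := by
    intro B hB
    have : Measurable (fun p : 𝒜 × Ω => Y p.1 p.2) :=
      measurable_from_prod_countable_right hYmeas
    exact this.comp (hB.prodMk measurable_id)
  set p : 𝒜 → ℝ := fun a => (μ {ω | Astar ω = a}).toReal with hp
  set j : 𝒜 → 𝒜 → 𝒴 → ℝ := fun b a y => (μ {ω | Astar ω = b ∧ Y a ω = y}).toReal with hj
  set q : 𝒜 → 𝒴 → ℝ := fun a y => (μ {ω | Y a ω = y}).toReal with hq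
  have hp0 : ∀ a, 0 ≤ p a := fun a => ENNReal.toReal_nonneg
  have hj0 : ∀ b a y, 0 ≤ j b a y := fun b a y => ENNReal.toReal_nonneg
  have hq0 : ∀ a y, 0 ≤ q a y := fun a y => ENNReal.toReal_nonneg
  have hjp : ∀ b a y, j b a y ≤ p b := fun b a y =>
    ENNReal.toReal_mono (measure_ne_top _ _) (measure_mono fun ω h => h.1)
  have hjq : ∀ b a y, j b a y ≤ q a y := fun b a y =>
    ENNReal.toReal_mono (measure_ne_top _ _) (measure_mono fun ω h => h.2)
  have hjsum : ∀ b a, ∑ y, j b a y = p b := by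
    intro b a
    change _ = (μ {ω | Astar ω = b}).toReal
    rw [← aux_sum μ (Y a) (hYmeas a) {ω | Astar ω = b}]
    refine Finset.sum_congr rfl fun y _ => ?_
    simp only [hj, Set.mem_ofPred_eq, and_comm]
  have hqsum : ∀ a, ∑ y, q a y = 1 := by
    intro a
    have := aux_sum μ (Y a) (hYmeas a) Set.univ
    simpa using this
  -- independence
  have hind : ∀ a (S : Set (𝒜 × (𝒜 → 𝒴))), MeasurableSet S →
      (μ {ω | A ω = a ∧ (Astar ω, fun a => Y a ω) ∈ S}).toReal =
        p a * (μ {ω | (Astar ω, fun a => Y a ω) ∈ S}).toReal := by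
    intro a S hS
    have := hindep.measure_inter_preimage_eq_mul {a} S (measurableSet_singleton a) hS
    simp only [hp]
    rw [← hmatch a, ← ENNReal.toReal_mul]
    exact congrArg ENNReal.toReal this
  have hms : ∀ a y, MeasurableSet {x : 𝒜 × (𝒜 → 𝒴) | x.2 a = y} := by
    intro a y
    have hm : Measurable (fun x : 𝒜 × (𝒜 → 𝒴) => x.2 a) :=
      (measurable_pi_apply a).comp measurable_snd
    exact hm (measurableSet_singleton y)
  have hq1 : ∀ a y, (μ {ω | A ω = a ∧ Y (A ω) ω = y}).toReal = p a * q a y := by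
    intro a y
    have := hind a {x | x.2 a = y}
      (hms a y)
    simp only [Set.mem_ofPred_eq] at this
    rw [← this]
    congr 2; ext ω
    simp only [Set.mem_ofPred_eq]
    constructor
    · rintro ⟨rfl, h⟩; exact ⟨rfl, h⟩
    · rintro ⟨rfl, h⟩; exact ⟨rfl, h⟩
  have hj1 : ∀ b a y, (μ {ω | Astar ω = b ∧ (A ω, Y (A ω) ω) = (a, y)}).toReal
      = p a * j b a y := by
    intro b a y
    have := hind a ({x | x.1 = b} ∩ {x | x.2 a = y})
      ((measurable_fst (measurableSet_singleton b)).inter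
      (hms a y))
    simp only [Set.mem_ofPred_eq, Set.mem_inter_iff] at this
    rw [← this]
    congr 2; ext ω
    simp only [Set.mem_ofPred_eq, Prod.mk.injEq]
    constructor
    · rintro ⟨h1, rfl, h⟩; exact ⟨rfl, h1, h⟩
    · rintro ⟨rfl, h1, h⟩; exact ⟨h1, rfl, h⟩
  have hq1' : ∀ a y, (μ {ω | (A ω, Y (A ω) ω) = (a, y)}).toReal = p a * q a y := by
    intro a y
    rw [← hq1]; simp only [Prod.mk.injEq]
  -- mutual information
  set D : 𝒜 → 𝒜 → ℝ := fun b a => ∑ y, j b a y * Real.log (j b a y / (p b * q a y)) with hDdef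
  have hMI : mutualInfo μ Astar (fun ω => (A ω, Y (A ω) ω)) = ∑ b, ∑ a, p a * D b a := by
    unfold mutualInfo
    refine Finset.sum_congr rfl fun b _ => ?_
    rw [Fintype.sum_prod_type]
    refine Finset.sum_congr rfl fun a _ => ?_
    rw [hDdef, Finset.mul_sum]
    refine Finset.sum_congr rfl fun y _ => ?_
    rw [hj1, hq1']
    change p a * j b a y * Real.log (p a * j b a y / (p b * (p a * q a y))) = _
    by_cases h : p a = 0
    · simp [h]
    · rw [mul_left_comm (p b), mul_div_mul_left _ _ h, mul_assoc]
  -- reward centering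
  obtain ⟨c, hc⟩ : ∃ c, ∀ y, |R y - c| ≤ 1 / 2 := by
    refine ⟨((⨆ y, R y) + ⨅ y, R y) / 2, fun y => ?_⟩
    have h1 := le_ciSup (Set.finite_range R).bddAbove y
    have h2 := ciInf_le (Set.finite_range R).bddBelow y
    rw [abs_le]; constructor <;> linarith
  have hpin : ∀ b a, 0 ≤ D b a ∧
      2 * (∑ y, R y * (j b a y - p b * q a y)) ^ 2 ≤ p b * D b a := by
    intro b a
    refine aux_pinsker (j b a) (fun y => p b * q a y) R (p b) c (hj0 b a)
      (fun y => mul_nonneg (hp0 b) (hq0 a y)) ?_ (hjsum b a) ?_ hc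
    · intro y h
      rcases mul_eq_zero.1 h with h | h
      · exact le_antisymm (h ▸ hjp b a y) (hj0 b a y)
      · exact le_antisymm (h ▸ hjq b a y) (hj0 b a y)
    · rw [← Finset.mul_sum, hqsum, mul_one]
  -- expectation
  have hE : ∀ B : Ω → 𝒜, Measurable B → ∫ ω, R (Y (B ω) ω) ∂μ =
      ∑ a, ∑ y, (μ {ω | B ω = a ∧ Y (B ω) ω = y}).toReal * R y := by
    intro B hB
    have := aux_integral μ (fun ω => (B ω, Y (B ω) ω)) (hB.prodMk (hYA B hB)) (fun z => R z.2)
    rw [this, Fintype.sum_prod_type]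
    simp only [Prod.mk.injEq]
  have hint : ∀ B : Ω → 𝒜, Measurable B → Integrable (fun ω => R (Y (B ω) ω)) μ := by
    intro B hB
    exact Integrable.comp_measurable (g := R) .of_finite (hYA B hB)
  have hj2 : ∀ a y, (μ {ω | Astar ω = a ∧ Y (Astar ω) ω = y}).toReal = j a a y := by
    intro a y
    simp only [hj]
    congr 2; ext ω
    simp only [Set.mem_ofPred_eq]
    constructor
    · rintro ⟨rfl, h⟩; exact ⟨rfl, h⟩
    · rintro ⟨rfl, h⟩; exact ⟨rfl, h⟩
  have hEE : ∫ ω, (R (Y (Astar ω) ω) - R (Y (A ω) ω)) ∂μ =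
      ∑ a, ∑ y, R y * (j a a y - p a * q a y) := by
    rw [integral_sub (hint _ hAstarMeas) (hint _ hAMeas), hE _ hAstarMeas, hE _ hAMeas]
    simp only [hq1, hj2, ← Finset.sum_sub_distrib]
    refine Finset.sum_congr rfl fun a _ => Finset.sum_congr rfl fun y _ => ?_
    ring
  rw [hEE, hMI]
  have h1 : (∑ a, ∑ y, R y * (j a a y - p a * q a y)) ^ 2 ≤
      (Fintype.card 𝒜 : ℝ) * ∑ a, (∑ y, R y * (j a a y - p a * q a y)) ^ 2 := by
    have := sq_sum_le_card_mul_sum_sq (s := (Finset.univ : Finset 𝒜))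
      (f := fun a => ∑ y, R y * (j a a y - p a * q a y))
    simpa using this
  have h2 : 2 * ∑ a, (∑ y, R y * (j a a y - p a * q a y)) ^ 2 ≤ ∑ b, ∑ a, p a * D b a := by
    rw [Finset.mul_sum]
    refine Finset.sum_le_sum fun b _ => (hpin b b).2.trans ?_
    exact Finset.single_le_sum (f := fun a => p a * D b a)
      (fun a _ => mul_nonneg (hp0 a) (hpin b a).1) (Finset.mem_univ b)
  have h3 := mul_le_mul_of_nonneg_left h2 (Nat.cast_nonneg (α := ℝ) (Fintype.card 𝒜))
  linarith
end

section
/- Assume sup_{y∈𝒴} R(y) − inf_{y∈𝒴} R(y) ≤ 1, that 𝒜 is a finite subset of ℝ^d, and that the conditional means are linear: there is a map μ : 𝒜 → ℝ^d such that for every a ∈ 𝒜 and every a* ∈ 𝒜 with ℙ(A* = a*) > 0, E[R(Y_a) | A* = a*] = aᵀ μ(a*), and for every a ∈ 𝒜, E[R(Y_a)] = aᵀ μ̄ where μ̄ = Σ_{a*∈𝒜} ℙ(A* = a*) μ(a*). Then ( E[R(Y_{A*}) − R(Y_A)] )² ≤ (d/2) · I(A*; (A, Y_A)), i.e. the information ratio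 of Thompson sampling for linear bandit problems is at most d/2. -/
open MeasureTheory ProbabilityTheory Real

lemma trace_sq_le {ι : Type*} [Fintype ι] {d : ℕ} (U : ι → Fin d → ℝ) (V : ι → Fin d → ℝ) :
    (∑ x, ∑ i, U x i * V x i) ^ 2 ≤ (d : ℝ) * ∑ a, ∑ x, (∑ i, U a i * V x i) ^ 2 := by
  classical
  let u : Fin d → EuclideanSpace ℝ ι := fun i => WithLp.toLp 2 (fun a => U a i)
  let W : Submodule ℝ (EuclideanSpace ℝ ι) := Submodule.span ℝ (Set.range u)
  have hW : Module.finrank ℝ W ≤ d := by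
    have := finrank_range_le_card (R := ℝ) u
    simpa [Set.finrank] using this
  let m : ι → W := fun x => ∑ i, V x i • (⟨u i, Submodule.subset_span ⟨i, rfl⟩⟩ : W)
  have hm : ∀ x a, (m x : EuclideanSpace ℝ ι) a = ∑ i, U a i * V x i := by
    intro x a
    simp [m, u, mul_comm]
  let e := stdOrthonormalBasis ℝ W
  have h1 : ∀ x, (∑ i, U x i * V x i) = ∑ j, inner ℝ (e j) (m x) * (e j : EuclideanSpace ℝ ι) x := by
    intro x
    rw [← hm]
    conv_lhs => rw [← e.sum_repr' (m x)]
    simp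
  have h2 : ∀ x, ∑ a, (∑ i, U a i * V x i) ^ 2 = ∑ j, (inner ℝ (e j) (m x)) ^ 2 := by
    intro x
    have h := e.sum_sq_norm_inner_right (m x)
    have h' : ‖m x‖ ^ 2 = ∑ a, (∑ i, U a i * V x i) ^ 2 := by
      rw [Submodule.coe_norm, EuclideanSpace.norm_sq_eq]
      simp [hm]
    rw [← h', ← h]
    simp
  have h3 : ∑ x, ∑ j, ((e j : EuclideanSpace ℝ ι) x) ^ 2 = Module.finrank ℝ W := by
    rw [Finset.sum_comm]
    have : ∀ j, ∑ x, ((e j : EuclideanSpace ℝ ι) x) ^ 2 = 1 := by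
      intro j
      have h := e.orthonormal.1 j
      rw [Submodule.coe_norm] at h
      have h' := EuclideanSpace.norm_sq_eq (e j : EuclideanSpace ℝ ι)
      rw [h] at h'
      simpa using h'.symm
    simp [this]
  conv_rhs => rw [Finset.sum_comm]
  simp_rw [h1, h2]
  have cs := Finset.sum_mul_sq_le_sq_mul_sq (Finset.univ : Finset (ι × Fin (Module.finrank ℝ W)))
    (fun z => inner ℝ (e z.2) (m z.1)) (fun z => (e z.2 : EuclideanSpace ℝ ι) z.1)
  simp only [Fintype.sum_prod_type] at cs
  rw [h3] at cs
  refine cs.trans ?_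
  rw [mul_comm]
  have : (Module.finrank ℝ W : ℝ) ≤ d := by exact_mod_cast hW
  exact mul_le_mul_of_nonneg_right this (by positivity)

lemma term_bound {p q g : ℝ} (hp : 0 ≤ p) (hq : 0 ≤ q) (h : q = 0 → p = 0) :
    p * g + p - q * Real.exp g ≤ p * Real.log (p / q) := by
  rcases hp.eq_or_lt with rfl | hp
  · simp; positivity
  have hq : 0 < q := lt_of_le_of_ne hq (fun h0 => hp.ne' (h h0.symm))
  have h1 := Real.log_le_sub_one_of_pos (x := q * Real.exp g / p) (by positivity)
  rw [Real.log_div (by positivity) hp.ne', Real.log_mul hq.ne' (Real.exp_pos _).ne',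
    Real.log_exp] at h1
  rw [Real.log_div hp.ne' hq.ne']
  have h2 := mul_le_mul_of_nonneg_left h1 hp.le
  have h3 : p * (q * Real.exp g / p - 1) = q * Real.exp g - p := by field_simp
  nlinarith

lemma setIntegral_fin {Ω : Type*} [MeasurableSpace Ω] (μ : Measure Ω) [IsProbabilityMeasure μ]
    {𝒴 : Type*} [Fintype 𝒴] [MeasurableSpace 𝒴] [MeasurableSingletonClass 𝒴]
    (Z : Ω → 𝒴) (hZ : Measurable Z) (s : Set Ω) (hs : MeasurableSet s) (f : 𝒴 → ℝ) :
    ∫ ω in s, f (Z ω) ∂μ = ∑ y, μ.real {ω | ω ∈ s ∧ Z ω = y} * f y := by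
  have : ∫ ω in s, f (Z ω) ∂μ = ∫ y, f y ∂((μ.restrict s).map Z) := by
    rw [integral_map hZ.aemeasurable]
    exact (measurable_of_finite f).aestronglyMeasurable
  rw [this, integral_fintype (Integrable.of_finite)]
  refine Finset.sum_congr rfl fun y _ => ?_
  rw [map_measureReal_apply hZ (measurableSet_singleton y), measureReal_restrict_apply (hZ (measurableSet_singleton y))]
  rw [smul_eq_mul]
  congr 2
  ext ω; simp [and_comm]

lemma hoeff {Ω : Type*} [MeasurableSpace Ω] (μ : Measure Ω) [IsProbabilityMeasure μ]
    {𝒴 : Type*} [Fintype 𝒴] [Nonempty 𝒴] [MeasurableSpace 𝒴] [MeasurableSingletonClass 𝒴]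
    (Z : Ω → 𝒴) (hZ : Measurable Z) (R : 𝒴 → ℝ) (hR : (⨆ y, R y) - (⨅ y, R y) ≤ 1) (t : ℝ) :
    ∫ ω, Real.exp (t * (R (Z ω) - ∫ ω, R (Z ω) ∂μ) - t ^ 2 / 8) ∂μ ≤ 1 := by
  have hm : Measurable fun ω => R (Z ω) := (measurable_of_finite R).comp hZ
  have h := hasSubgaussianMGF_of_mem_Icc (μ := μ) (X := fun ω => R (Z ω)) (a := ⨅ y, R y)
    (b := (⨅ y, R y) + 1) hm.aemeasurable (Filter.Eventually.of_forall fun ω =>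
      ⟨ciInf_le (Set.finite_range R).bddBelow _, by
        have := le_ciSup (Set.finite_range R).bddAbove (Z ω)
        linarith⟩)
  have h2 := h.mgf_le t
  simp only [mgf] at h2
  simp_rw [Real.exp_sub _ (t ^ 2 / 8)]
  rw [integral_div, div_le_one (Real.exp_pos _)]
  refine h2.trans (Real.exp_le_exp.2 (le_of_eq ?_))
  simp
  ring

/-- **Proposition 5** (information ratio for linear optimization under bandit
feedback). Suppose the action set `𝒜` is a finite subset of `ℝ^d`, rewards have
range of width at most one, and the conditional mean rewards are linear:
`E[R(Y_a) | A* = a*] = aᵀ μlin(a*)` and `E[R(Y_a)] = aᵀ μ̄` with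
`μ̄ = Σ_{a*} ℙ(A* = a*) μlin(a*)`. Then under Thompson sampling
`(E[R(Y_{A*}) − R(Y_A)])² ≤ (d/2) · I(A*; (A, Y_A))`. -/
theorem information_ratio_le_dim_div_two_of_linear
    {Ω : Type*} [MeasurableSpace Ω] (μ : Measure Ω) [IsProbabilityMeasure μ]
    {d : ℕ} (𝒜 : Finset (Fin d → ℝ)) (h𝒜 : 𝒜.Nonempty)
    {𝒴 : Type*} [Fintype 𝒴] [Nonempty 𝒴]
    [MeasurableSpace 𝒴] [MeasurableSingletonClass 𝒴]
    (Y : ↥𝒜 → Ω → 𝒴) (Astar A : Ω → ↥𝒜) (R : 𝒴 → ℝ)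
    (hR : (⨆ y, R y) - (⨅ y, R y) ≤ 1)
    (hYmeas : ∀ a, Measurable (Y a)) (hAstarMeas : Measurable Astar)
    (hAMeas : Measurable A)
    (hmatch : ∀ a : ↥𝒜, μ {ω | A ω = a} = μ {ω | Astar ω = a})
    (hindep : IndepFun A (fun ω => (Astar ω, fun a => Y a ω)) μ)
    (μlin : ↥𝒜 → (Fin d → ℝ))
    (hlin : ∀ (a astar : ↥𝒜), μ {ω | Astar ω = astar} ≠ 0 →
      ∫ ω, R (Y a ω) ∂(μ[|{ω | Astar ω = astar}]) =
        ∑ i, (a : Fin d → ℝ) i * μlin astar i)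
    (hlinMean : ∀ a : ↥𝒜,
      ∫ ω, R (Y a ω) ∂μ =
        ∑ i, (a : Fin d → ℝ) i *
          (∑ astar : ↥𝒜, (μ {ω | Astar ω = astar}).toReal * μlin astar i)) :
    (∫ ω, (R (Y (Astar ω) ω) - R (Y (A ω) ω)) ∂μ) ^ 2 ≤
      ((d : ℝ) / 2) * mutualInfo μ Astar (fun ω => (A ω, Y (A ω) ω)) := by
  classical
  set p : ↥𝒜 → ℝ := fun x => μ.real {ω | Astar ω = x} with hp
  have hp0 : ∀ x, 0 ≤ p x := fun x => measureReal_nonneg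
  have hAs : ∀ x, MeasurableSet {ω | Astar ω = x} := fun x =>
    hAstarMeas (measurableSet_singleton x)
  have hAa : ∀ x, MeasurableSet {ω | A ω = x} := fun x =>
    hAMeas (measurableSet_singleton x)
  have hpA : ∀ a, μ.real {ω | A ω = a} = p a := fun a => by
    simp only [hp, Measure.real, hmatch]
  have hRm : Measurable R := measurable_of_finite R
  have hint : ∀ a, Integrable (fun ω => R (Y a ω)) μ := fun a => by
    have : Integrable R (μ.map (Y a)) := Integrable.of_finite
    exact this.comp_measurable (hYmeas a)
  -- conditional means
  have hJ : ∀ a x, ∫ ω in {ω | Astar ω = x}, R (Y a ω) ∂μ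
      = p x * ∑ i, (a : Fin d → ℝ) i * μlin x i := by
    intro a x
    by_cases h : μ {ω | Astar ω = x} = 0
    · rw [Measure.restrict_eq_zero.2 h]
      simp [hp, Measure.real, h]
    · rw [← hlin a x h, ProbabilityTheory.cond, integral_smul_measure]
      simp only [hp, Measure.real, ENNReal.toReal_inv, smul_eq_mul]
      rw [mul_inv_cancel_left₀]
      exact (ENNReal.toReal_pos h (measure_ne_top _ _)).ne'
  set mb : Fin d → ℝ := fun i => ∑ x : ↥𝒜, p x * μlin x i with hmb
  have hmean : ∀ a : ↥𝒜, ∫ ω, R (Y a ω) ∂μ = ∑ i, (a : Fin d → ℝ) i * mb i := hlinMean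
  set D : ↥𝒜 → ↥𝒜 → ℝ := fun a x => ∑ i, (a : Fin d → ℝ) i * (μlin x i - mb i) with hD
  have hD' : ∀ a x, D a x = (∑ i, (a : Fin d → ℝ) i * μlin x i) - ∫ ω, R (Y a ω) ∂μ := by
    intro a x
    rw [hmean, ← Finset.sum_sub_distrib]
    simp only [hD, mul_sub]
  -- independence
  have hev : ∀ a, Measurable (fun v : ↥𝒜 × (↥𝒜 → 𝒴) => v.2 a) := fun a =>
    (measurable_pi_apply a).comp measurable_snd
  have hind1 : ∀ a x y, μ.real {ω | Astar ω = x ∧ (A ω, Y (A ω) ω) = (a, y)}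
      = p a * μ.real {ω | Astar ω = x ∧ Y a ω = y} := by
    intro a x y
    have hs : MeasurableSet {v : ↥𝒜 × (↥𝒜 → 𝒴) | v.1 = x ∧ v.2 a = y} :=
      (measurable_fst (measurableSet_singleton x)).inter
        (hev a (measurableSet_singleton y))
    have h := hindep.measure_inter_preimage_eq_mul {a} _ (measurableSet_singleton a) hs
    rw [← hpA, Measure.real, Measure.real, Measure.real, ← ENNReal.toReal_mul]
    congr 1
    refine Eq.trans (congrArg μ ?_) h
    ext ω
    simp only [Set.mem_setOf_eq, Set.mem_inter_iff, Set.mem_preimage, Set.mem_singleton_iff,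
      Prod.mk.injEq]
    constructor
    · rintro ⟨h1, rfl, h3⟩; exact ⟨rfl, h1, h3⟩
    · rintro ⟨rfl, h1, h3⟩; exact ⟨h1, rfl, h3⟩
  have hind2 : ∀ a y, μ.real {ω | (A ω, Y (A ω) ω) = (a, y)}
      = p a * μ.real {ω | Y a ω = y} := by
    intro a y
    have hs : MeasurableSet {v : ↥𝒜 × (↥𝒜 → 𝒴) | v.2 a = y} :=
        (hev a (measurableSet_singleton y))
    have h := hindep.measure_inter_preimage_eq_mul {a} _ (measurableSet_singleton a) hs
    rw [← hpA, Measure.real, Measure.real, Measure.real, ← ENNReal.toReal_mul]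
    congr 1
    refine Eq.trans (congrArg μ ?_) h
    ext ω
    simp only [Set.mem_setOf_eq, Set.mem_inter_iff, Set.mem_preimage, Set.mem_singleton_iff,
      Prod.mk.injEq]
    constructor
    · rintro ⟨rfl, h3⟩; exact ⟨rfl, h3⟩
    · rintro ⟨rfl, h3⟩; exact ⟨rfl, h3⟩
  -- Pinsker type bound
  have hpin : ∀ a x, p x * (2 * D a x ^ 2) ≤ ∑ y, μ.real {ω | Astar ω = x ∧ Y a ω = y} *
      Real.log (μ.real {ω | Astar ω = x ∧ Y a ω = y} / (p x * μ.real {ω | Y a ω = y})) := by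
    intro a x
    set t := 4 * D a x with ht
    set m := ∫ ω, R (Y a ω) ∂μ with hm
    set g : 𝒴 → ℝ := fun y => t * (R y - m) - t ^ 2 / 8 with hg
    have e1 : ∑ y, μ.real {ω | Y a ω = y} * Real.exp (g y) ≤ 1 := by
      have h := setIntegral_fin μ (Y a) (hYmeas a) Set.univ MeasurableSet.univ
        (fun y => Real.exp (g y))
      simp only [Set.mem_univ, true_and, Measure.restrict_univ] at h
      rw [← h]
      exact hoeff μ (Y a) (hYmeas a) R hR t
    have e2 : ∑ y, μ.real {ω | Astar ω = x ∧ Y a ω = y} = p x := by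
      have h := setIntegral_fin μ (Y a) (hYmeas a) _ (hAs x) (fun y => 1)
      simpa using h.symm
    have e3 : ∑ y, μ.real {ω | Astar ω = x ∧ Y a ω = y} * R y
        = p x * (D a x + m) := by
      rw [hD', sub_add_cancel, ← hJ]
      exact (setIntegral_fin μ (Y a) (hYmeas a) _ (hAs x) R).symm
    have e4 : ∑ y, μ.real {ω | Astar ω = x ∧ Y a ω = y} * g y = p x * (2 * D a x ^ 2) := by
      have : ∀ y, μ.real {ω | Astar ω = x ∧ Y a ω = y} * g y
          = t * (μ.real {ω | Astar ω = x ∧ Y a ω = y} * R y)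
            - (t * m + t ^ 2 / 8) * μ.real {ω | Astar ω = x ∧ Y a ω = y} := by
        intro y; simp only [hg]; ring
      simp_rw [this]
      rw [Finset.sum_sub_distrib, ← Finset.mul_sum, ← Finset.mul_sum, e2, e3, ht]
      ring
    have e5 : ∑ y, (μ.real {ω | Astar ω = x ∧ Y a ω = y} * g y
        + μ.real {ω | Astar ω = x ∧ Y a ω = y}
        - p x * μ.real {ω | Y a ω = y} * Real.exp (g y)) ≤
        ∑ y, μ.real {ω | Astar ω = x ∧ Y a ω = y} *
      Real.log (μ.real {ω | Astar ω = x ∧ Y a ω = y} / (p x * μ.real {ω | Y a ω = y})) := by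
      refine Finset.sum_le_sum fun y _ => term_bound measureReal_nonneg
        (mul_nonneg (hp0 x) measureReal_nonneg) fun h => ?_
      refine le_antisymm ?_ measureReal_nonneg
      rcases mul_eq_zero.1 h with h | h
      · rw [← h]; exact measureReal_mono (fun ω hω => hω.1)
      · rw [← h]; exact measureReal_mono (fun ω hω => hω.2)
    refine le_trans ?_ e5
    simp_rw [mul_assoc (p x)]
    rw [Finset.sum_sub_distrib, Finset.sum_add_distrib, e4, e2, ← Finset.mul_sum]
    nlinarith [hp0 x]
  -- mutual information lower bound
  have hMI : ∑ a, ∑ x, p a * (p x * (2 * D a x ^ 2)) ≤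
      mutualInfo μ Astar (fun ω => (A ω, Y (A ω) ω)) := by
    rw [Finset.sum_comm]
    unfold mutualInfo
    refine Finset.sum_le_sum fun x _ => ?_
    rw [Fintype.sum_prod_type]
    refine Finset.sum_le_sum fun a _ => ?_
    refine (mul_le_mul_of_nonneg_left (hpin a x) (hp0 a)).trans (le_of_eq ?_)
    rw [Finset.mul_sum]
    refine Finset.sum_congr rfl fun y _ => ?_
    have h1 := hind1 a x y
    have h2 := hind2 a y
    simp only [Measure.real] at h1 h2 ⊢
    rw [h1, h2]
    by_cases h0 : p a = 0
    · simp [h0]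
    · rw [mul_assoc]
      congr 3
      rw [mul_left_comm, mul_div_mul_left _ _ h0]
      rfl
  -- regret
  have hsplit : ∀ B : Ω → ↥𝒜, (∀ x, MeasurableSet {ω | B ω = x}) →
      Integrable (fun ω => R (Y (B ω) ω)) μ ∧
      ∫ ω, R (Y (B ω) ω) ∂μ = ∑ x, ∫ ω in {ω | B ω = x}, R (Y x ω) ∂μ := by
    intro B hB
    have h : (fun ω => R (Y (B ω) ω)) =
        fun ω => ∑ x, Set.indicator {ω | B ω = x} (fun ω => R (Y x ω)) ω := by
      funext ω
      simp [Set.indicator_apply]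
    rw [h]
    refine ⟨integrable_finsetSum _ fun x _ => (hint x).indicator (hB x), ?_⟩
    rw [integral_finsetSum _ fun x _ => (hint x).indicator (hB x)]
    exact Finset.sum_congr rfl fun x _ => integral_indicator (hB x)
  have hA2 : ∀ a, ∫ ω in {ω | A ω = a}, R (Y a ω) ∂μ = p a * ∫ ω, R (Y a ω) ∂μ := by
    intro a
    let φ : ↥𝒜 → ℝ := fun b => if b = a then 1 else 0
    let ψ : ↥𝒜 × (↥𝒜 → 𝒴) → ℝ := fun v => R (v.2 a)
    have hφ : Measurable φ := measurable_of_finite φ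
    have hψ : Measurable ψ := hRm.comp ((measurable_pi_apply a).comp measurable_snd)
    have h := (hindep.comp hφ hψ).integral_fun_mul_eq_mul_integral
      (hφ.comp hAMeas).aestronglyMeasurable (hint a).aestronglyMeasurable
    have h1 : ∫ ω, φ (A ω) ∂μ = p a := by
      rw [← hpA, ← integral_indicator_one (hAa a)]
      congr 1
      funext ω
      simp [φ, Set.indicator_apply]
    rw [← h1, ← integral_indicator (hAa a)]
    refine Eq.trans (congrArg _ ?_) h
    funext ω
    simp [φ, ψ, Set.indicator_apply]
  have hreg : ∫ ω, (R (Y (Astar ω) ω) - R (Y (A ω) ω)) ∂μ = ∑ x, p x * D x x := by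
    rw [integral_sub (hsplit Astar hAs).1 (hsplit A hAa).1, (hsplit Astar hAs).2,
      (hsplit A hAa).2, ← Finset.sum_sub_distrib]
    refine Finset.sum_congr rfl fun x _ => ?_
    rw [hJ, hA2, hD', mul_sub]
  rw [hreg]
  have htr := trace_sq_le (fun (a : ↥𝒜) i => √(p a) * (a : Fin d → ℝ) i)
    (fun x i => √(p x) * (μlin x i - mb i))
  have hM : ∀ a x : ↥𝒜, ∑ i, √(p a) * (a : Fin d → ℝ) i * (√(p x) * (μlin x i - mb i))
      = √(p a) * √(p x) * D a x := by
    intro a x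
    simp only [hD, Finset.mul_sum]
    exact Finset.sum_congr rfl fun i _ => by ring
  simp only [hM, mul_pow, Real.sq_sqrt (hp0 _), Real.mul_self_sqrt (hp0 _)] at htr
  refine htr.trans ?_
  refine le_trans (le_of_eq ?_) (mul_le_mul_of_nonneg_left hMI (by positivity : (0:ℝ) ≤ (d:ℝ) / 2))
  simp only [Finset.mul_sum]
  exact Finset.sum_congr rfl fun a _ => Finset.sum_congr rfl fun x _ => by ring
end

section
/- Fix σ ≥ 0 and assume that for each a ∈ 𝒜, the centered reward R(Y_a) − E[R(Y_a)] is σ-sub-Gaussian, i.e. E[exp(λ (R(Y_a) − E[R(Y_a)]))] ≤ exp(λ² σ² / 2) for all λ ∈ ℝ. Then ( E[R(Y_{A*}) − R(Y_A)] )² ≤ 2 |𝒜| σ² · I(A*; (A, Y_A)). -/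
open MeasureTheory ProbabilityTheory Real

lemma pointwise_dv (q p r f c : ℝ) (hq : 0 ≤ q) (hp : q ≤ p) (hr : q ≤ r) :
    q * (f - c) - q * Real.log (q / (p * r)) ≤ p * (r * Real.exp f) * Real.exp (-c) - q := by
  rcases hq.eq_or_lt with h | h
  · subst h
    simp only [zero_mul, sub_zero]
    positivity
  · have hp' : 0 < p := by linarith
    have hr' : 0 < r := by linarith
    have h1 := Real.log_le_sub_one_of_pos (x := p * r * Real.exp (f - c) / q) (by positivity)
    rw [Real.log_div (by positivity) h.ne', Real.log_mul (by positivity) (by positivity),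
      Real.log_exp] at h1
    rw [Real.log_div h.ne' (by positivity)]
    have h2 := mul_le_mul_of_nonneg_left h1 h.le
    have h3 : q * (p * r * Real.exp (f - c) / q - 1)
        = p * (r * Real.exp f) * Real.exp (-c) - q := by
      rw [sub_eq_add_neg f c, Real.exp_add]; field_simp
    rw [h3] at h2
    linarith

lemma finite_dv {𝒴 : Type*} [Fintype 𝒴] (q r f : 𝒴 → ℝ) (p c : ℝ) (hq : ∀ y, 0 ≤ q y)
    (hsum : ∑ y, q y = p) (hr : ∀ y, q y ≤ r y)
    (hE : ∑ y, r y * Real.exp (f y) ≤ Real.exp c) :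
    ∑ y, q y * f y - p * c ≤ ∑ y, q y * Real.log (q y / (p * r y)) := by
  have hp : 0 ≤ p := hsum ▸ Finset.sum_nonneg fun y _ => hq y
  have h := Finset.sum_le_sum fun y (_ : y ∈ Finset.univ) =>
    pointwise_dv (q y) p (r y) (f y) c (hq y)
      (hsum ▸ Finset.single_le_sum (f := q) (fun y _ => hq y) (Finset.mem_univ y)) (hr y)
  simp only [mul_sub, Finset.sum_sub_distrib, ← Finset.sum_mul, ← Finset.mul_sum, hsum] at h
  have h2 : p * (∑ y, r y * Real.exp (f y)) * Real.exp (-c) ≤ p := by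
    calc _ ≤ p * Real.exp c * Real.exp (-c) := by gcongr
      _ = p := by rw [mul_assoc, ← Real.exp_add]; simp
  linarith

lemma integral_fin {Ω : Type*} [MeasurableSpace Ω] (μ : Measure Ω) [IsProbabilityMeasure μ]
    {𝒴 : Type*} [Fintype 𝒴] [MeasurableSpace 𝒴] [MeasurableSingletonClass 𝒴]
    (X : Ω → 𝒴) (hX : Measurable X) (g : 𝒴 → ℝ) :
    ∫ ω, g (X ω) ∂μ = ∑ y, (μ {ω | X ω = y}).toReal * g y := by
  have := Measure.isProbabilityMeasure_map (μ := μ) hX.aemeasurable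
  rw [← integral_map (μ := μ) (φ := X) (f := g) hX.aemeasurable
    (measurable_of_finite g).aestronglyMeasurable, integral_fintype (Integrable.of_finite)]
  refine Finset.sum_congr rfl fun y _ => ?_
  rw [Measure.real, Measure.map_apply hX (measurableSet_singleton y)]
  rfl

lemma marginal {Ω : Type*} [MeasurableSpace Ω] (μ : Measure Ω) [IsProbabilityMeasure μ]
    {𝒴 : Type*} [Fintype 𝒴] [MeasurableSpace 𝒴] [MeasurableSingletonClass 𝒴]
    (X : Ω → 𝒴) (hX : Measurable X) (S : Set Ω) :
    ∑ y, (μ {ω | ω ∈ S ∧ X ω = y}).toReal = (μ S).toReal := by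
  have h := sum_measureReal_preimage_singleton (μ := μ.restrict S) (f := X) Finset.univ
    (fun y _ => hX (measurableSet_singleton y))
  simp only [Finset.coe_univ, Set.preimage_univ, Measure.real, Measure.restrict_apply_univ] at h
  rw [← h]
  refine Finset.sum_congr rfl fun y _ => ?_
  rw [Measure.restrict_apply (hX (measurableSet_singleton y))]
  congr 2
  ext ω; simp [and_comm]

/-- **Corollary 1, worst case** (sub-Gaussian analogue of Proposition 3). If
for each action the centered reward is `σ`-sub-Gaussian, then under Thompson
sampling `(E[R(Y_{A*}) − R(Y_A)])² ≤ 2 |𝒜| σ² · I(A*; (A, Y_A))`. -/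
theorem information_ratio_le_subGaussian_worst_case
    {Ω : Type*} [MeasurableSpace Ω] (μ : Measure Ω) [IsProbabilityMeasure μ]
    {𝒜 𝒴 : Type*} [Fintype 𝒜] [Nonempty 𝒜] [Fintype 𝒴] [Nonempty 𝒴]
    [MeasurableSpace 𝒜] [MeasurableSingletonClass 𝒜]
    [MeasurableSpace 𝒴] [MeasurableSingletonClass 𝒴]
    (Y : 𝒜 → Ω → 𝒴) (Astar A : Ω → 𝒜) (R : 𝒴 → ℝ)
    (σ : ℝ) (hσ : 0 ≤ σ)
    (hsub : ∀ (a : 𝒜) (l : ℝ),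
      ∫ ω, Real.exp (l * (R (Y a ω) - ∫ ω', R (Y a ω') ∂μ)) ∂μ ≤
        Real.exp (l ^ 2 * σ ^ 2 / 2))
    (hYmeas : ∀ a, Measurable (Y a)) (hAstarMeas : Measurable Astar)
    (hAMeas : Measurable A)
    (hmatch : ∀ a : 𝒜, μ {ω | A ω = a} = μ {ω | Astar ω = a})
    (hindep : IndepFun A (fun ω => (Astar ω, fun a => Y a ω)) μ) :
    (∫ ω, (R (Y (Astar ω) ω) - R (Y (A ω) ω)) ∂μ) ^ 2 ≤
      2 * (Fintype.card 𝒜 : ℝ) * σ ^ 2 *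
        mutualInfo μ Astar (fun ω => (A ω, Y (A ω) ω)) := by
  classical
  have hcomp : ∀ B : Ω → 𝒜, Measurable B → Measurable (fun ω => Y (B ω) ω) := by
    intro B hB
    have : Measurable (fun p : 𝒜 × Ω => Y p.1 p.2) := measurable_from_prod_countable_right hYmeas
    exact this.comp (hB.prodMk measurable_id)
  set p : 𝒜 → ℝ := fun a => (μ {ω | Astar ω = a}).toReal with hp
  set q : 𝒜 → 𝒜 → 𝒴 → ℝ := fun x a y => (μ {ω | Astar ω = x ∧ Y a ω = y}).toReal with hq
  set r : 𝒜 → 𝒴 → ℝ := fun a y => (μ {ω | Y a ω = y}).toReal with hr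
  set m : 𝒜 → ℝ := fun a => ∫ ω', R (Y a ω') ∂μ with hm
  have hp0 : ∀ a, 0 ≤ p a := fun a => ENNReal.toReal_nonneg
  have hq0 : ∀ x a y, 0 ≤ q x a y := fun x a y => ENNReal.toReal_nonneg
  have hqr : ∀ x a y, q x a y ≤ r a y := fun x a y =>
    ENNReal.toReal_mono (measure_ne_top _ _) (measure_mono fun ω h => h.2)
  have hqp : ∀ x a, ∑ y, q x a y = p x := fun x a =>
    marginal μ (Y a) (hYmeas a) {ω | Astar ω = x}
  have hmr : ∀ a, m a = ∑ y, r a y * R y := fun a => integral_fin μ (Y a) (hYmeas a) R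
  have hE : ∀ a l, ∑ y, r a y * Real.exp (l * (R y - m a)) ≤ Real.exp (l ^ 2 * σ ^ 2 / 2) := by
    intro a l
    rw [← integral_fin μ (Y a) (hYmeas a) (fun y => Real.exp (l * (R y - m a)))]
    exact hsub a l
  -- independence
  have hj : ∀ x a y, (μ {ω | Astar ω = x ∧ (A ω, Y (A ω) ω) = (a, y)}).toReal
      = p a * q x a y := by
    intro x a y
    have h := hindep.measure_inter_preimage_eq_mul {a} {z | z.1 = x ∧ z.2 a = y}
      (measurableSet_singleton a)
      ((measurableSet_eq_fun measurable_fst measurable_const).inter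
        (measurableSet_eq_fun ((measurable_pi_apply a).comp measurable_snd) measurable_const))
    have e : {ω | Astar ω = x ∧ (A ω, Y (A ω) ω) = (a, y)} =
      A ⁻¹' {a} ∩ (fun ω => (Astar ω, fun a => Y a ω)) ⁻¹' {z | z.1 = x ∧ z.2 a = y} := by
      ext ω
      simp only [Prod.mk.injEq, Set.mem_setOf_eq, Set.mem_inter_iff, Set.mem_preimage,
        Set.mem_singleton_iff]
      constructor
      · rintro ⟨h1, h2, h3⟩
        subst h2
        exact ⟨rfl, h1, h3⟩
      · rintro ⟨h2, h1, h3⟩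
        subst h2
        exact ⟨h1, rfl, h3⟩
    rw [e, h, ENNReal.toReal_mul]
    congr 1
    exact congrArg ENNReal.toReal (hmatch a)
  have hz : ∀ a y, (μ {ω | (A ω, Y (A ω) ω) = (a, y)}).toReal = p a * r a y := by
    intro a y
    have h1 := marginal μ Astar hAstarMeas {ω | (A ω, Y (A ω) ω) = (a, y)}
    have h2 := marginal μ Astar hAstarMeas {ω | Y a ω = y}
    rw [← h1, hr]
    simp only
    rw [← h2, Finset.mul_sum]
    refine Finset.sum_congr rfl fun x _ => ?_
    simp only [Set.mem_setOf_eq]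
    rw [Set.setOf_and, Set.inter_comm, ← Set.setOf_and, hj, Set.setOf_and, Set.inter_comm,
      ← Set.setOf_and]
  set K : 𝒜 → 𝒜 → ℝ := fun x a => ∑ y, q x a y * Real.log (q x a y / (p x * r a y)) with hK
  have hI : mutualInfo μ Astar (fun ω => (A ω, Y (A ω) ω)) = ∑ x, ∑ a, p a * K x a := by
    unfold mutualInfo
    refine Finset.sum_congr rfl fun x _ => ?_
    rw [Fintype.sum_prod_type]
    refine Finset.sum_congr rfl fun a _ => ?_
    rw [hK, Finset.mul_sum]
    refine Finset.sum_congr rfl fun y _ => ?_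
    rw [hj, hz]
    by_cases h0 : p a = 0
    · simp [h0]
    · rw [mul_assoc, show (μ {ω | Astar ω = x}).toReal * (p a * r a y) = p a * (p x * r a y) by
        simp only [hp]; ring, mul_div_mul_left _ _ h0]
  have hdv : ∀ x a l, l * ∑ y, q x a y * (R y - m a) - p x * (l ^ 2 * σ ^ 2 / 2) ≤ K x a := by
    intro x a l
    have := finite_dv (q x a) (r a) (fun y => l * (R y - m a)) (p x) _ (hq0 x a) (hqp x a)
      (hqr x a) (hE a l)
    refine le_trans (le_of_eq ?_) this
    rw [Finset.mul_sum]
    congr 1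
    exact Finset.sum_congr rfl fun y _ => by ring
  have hK0 : ∀ x a, 0 ≤ K x a := fun x a => by simpa using hdv x a 0
  set D : 𝒜 → ℝ := fun a => ∑ y, q a a y * (R y - m a) with hD
  have hI2 : ∀ t : ℝ, t * ∑ a, D a - t ^ 2 * (Fintype.card 𝒜 * σ ^ 2) / 2 ≤
      mutualInfo μ Astar (fun ω => (A ω, Y (A ω) ω)) := by
    intro t
    rw [hI]
    calc _ = ∑ a : 𝒜, (t * D a - t ^ 2 * σ ^ 2 / 2) := by
          rw [Finset.sum_sub_distrib, ← Finset.mul_sum]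
          simp
          ring
      _ ≤ ∑ a, p a * K a a := by
          refine Finset.sum_le_sum fun a _ => ?_
          rcases (hp0 a).eq_or_lt with h0 | h0
          · have hqz : ∀ y, q a a y = 0 := by
              have h := hqp a a
              rw [← h0, Finset.sum_eq_zero_iff_of_nonneg (fun y _ => hq0 a a y)] at h
              exact fun y => h y (Finset.mem_univ y)
            have : D a = 0 := by simp [hD, hqz]
            rw [← h0, this]
            have : 0 ≤ t ^ 2 * σ ^ 2 / 2 := by positivity
            linarith
          · have h := mul_le_mul_of_nonneg_left (hdv a a (t / p a)) h0.le
            refine le_trans (le_of_eq ?_) h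
            change _ = p a * (t / p a * D a - _)
            field_simp
      _ ≤ ∑ x, ∑ a, p a * K x a := by
          refine Finset.sum_le_sum fun x _ => ?_
          exact Finset.single_le_sum (f := fun a => p a * K x a)
            (fun a _ => mul_nonneg (hp0 a) (hK0 x a)) (Finset.mem_univ x)
  have hint : ∀ B : Ω → 𝒜, Measurable B → Integrable (fun ω => R (Y (B ω) ω)) μ := by
    intro B hB
    have := Measure.isProbabilityMeasure_map (μ := μ) (hcomp B hB).aemeasurable
    exact (Integrable.of_finite (f := R) (μ := μ.map fun ω => Y (B ω) ω)).comp_measurable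
      (hcomp B hB)
  have hexp : ∫ ω, (R (Y (Astar ω) ω) - R (Y (A ω) ω)) ∂μ = ∑ a, D a := by
    rw [integral_sub (hint _ hAstarMeas) (hint _ hAMeas)]
    have h1 := integral_fin μ (fun ω => (Astar ω, Y (Astar ω) ω))
      (hAstarMeas.prodMk (hcomp _ hAstarMeas)) (fun z => R z.2)
    have h2 := integral_fin μ (fun ω => (A ω, Y (A ω) ω))
      (hAMeas.prodMk (hcomp _ hAMeas)) (fun z => R z.2)
    simp only at h1 h2
    rw [h1, h2, Fintype.sum_prod_type, Fintype.sum_prod_type, ← Finset.sum_sub_distrib]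
    refine Finset.sum_congr rfl fun a _ => ?_
    simp only [hz, hD, mul_sub, Finset.sum_sub_distrib, ← Finset.sum_mul, hqp]
    congr 1
    · refine Finset.sum_congr rfl fun y _ => ?_
      congr 3
      ext ω
      simp only [Prod.mk.injEq, Set.mem_setOf_eq]
      constructor <;> (rintro ⟨h1, h2⟩; subst h1; exact ⟨rfl, h2⟩)
    · rw [hmr, Finset.mul_sum]
      exact Finset.sum_congr rfl fun y _ => by ring
  rw [hexp]
  generalize mutualInfo μ Astar (fun ω => (A ω, Y (A ω) ω)) = I at hI2
  generalize (∑ a, D a) = d at hI2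
  have hs : (0 : ℝ) ≤ Fintype.card 𝒜 * σ ^ 2 := by positivity
  rw [mul_assoc 2]
  generalize (Fintype.card 𝒜 * σ ^ 2 : ℝ) = s at hI2 hs
  have := discrim_le_zero (a := s / 2) (b := -d) (c := I) (fun t => by linarith [hI2 t])
  unfold discrim at this
  linarith
end

section
/- Fix σ ≥ 0. Assume that for each a ∈ 𝒜, the centered reward R(Y_a) − E[R(Y_a)] is σ-sub-Gaussian, i.e. E[exp(λ (R(Y_a) − E[R(Y_a)]))] ≤ exp(λ² σ² / 2) for all λ ∈ ℝ. Assume further that 𝒜 is a finite subset of ℝ^d and the conditional means are linear: there is a map μ : 𝒜 → ℝ^d such that for every a ∈ 𝒜 and every a* ∈ 𝒜 with ℙ(A* = a*) > 0, E[R(Y_a) | A* = a*] = aᵀ μ(a*), and for every a ∈ 𝒜, E[R(Y_a)] = aᵀ μ̄ where μ̄ = Σ_{a*∈𝒜} ℙ(A* = a*) μ(a*). Then ( E[R(Y_{A*}) − R(Y_A)] )² ≤ 2 d σ² · I(A*; (A, Y_A)). -/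
open MeasureTheory ProbabilityTheory Real

/-- Trace inequality for a matrix of rank at most `d`. -/
lemma trace_sq_le_aux {ι : Type*} [Fintype ι] {d : ℕ} (B C : ι → Fin d → ℝ) :
    (∑ s, ∑ i, B s i * C s i) ^ 2 ≤
      (d : ℝ) * ∑ s, ∑ t, (∑ i, B s i * C t i) ^ 2 := by
  classical
  let b : Fin d → EuclideanSpace ℝ ι := fun i => WithLp.toLp 2 (fun s => B s i)
  let W : Submodule ℝ (EuclideanSpace ℝ ι) := Submodule.span ℝ (Set.range b)
  have hk : Module.finrank ℝ W ≤ d := by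
    have h := finrank_range_le_card (R := ℝ) b
    rw [Fintype.card_fin] at h
    exact h
  let c : ι → W := fun t => ∑ i, C t i • ⟨b i, Submodule.subset_span ⟨i, rfl⟩⟩
  have hc : ∀ t s, (c t : EuclideanSpace ℝ ι) s = ∑ i, B s i * C t i := by
    intro t s
    simp [c, b, mul_comm]
  let u := stdOrthonormalBasis ℝ W
  have hexp : ∀ t, (∑ i, B t i * C t i) =
      ∑ j, inner ℝ (u j) (c t) * (u j : EuclideanSpace ℝ ι) t := by
    intro t
    rw [← hc t t]
    conv_lhs => rw [← u.sum_repr' (c t)]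
    simp
  have hnorm : ∀ t, ∑ s, (∑ i, B s i * C t i) ^ 2 = ∑ j, (inner ℝ (u j) (c t)) ^ 2 := by
    intro t
    have h1 := u.sum_sq_norm_inner_right (c t)
    have h2 := EuclideanSpace.norm_sq_eq (c t : EuclideanSpace ℝ ι)
    simp only [Real.norm_eq_abs, sq_abs] at h1 h2
    rw [h1, Submodule.coe_norm, h2]
    simp [hc]
  have hu : ∀ j, ∑ t, ((u j : EuclideanSpace ℝ ι) t) ^ 2 = 1 := by
    intro j
    have h2 := EuclideanSpace.norm_sq_eq (u j : EuclideanSpace ℝ ι)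
    have h3 : ‖(u j : EuclideanSpace ℝ ι)‖ = 1 := u.orthonormal.1 j
    rw [h3] at h2
    simpa using h2.symm
  have hF : ∑ s, ∑ t, (∑ i, B s i * C t i) ^ 2 = ∑ j, ∑ t, (inner ℝ (u j) (c t)) ^ 2 := by
    rw [Finset.sum_comm, Finset.sum_congr rfl (fun t _ => hnorm t), Finset.sum_comm]
  rw [hF, Finset.sum_congr rfl (fun t _ => hexp t), Finset.sum_comm]
  have h0 : 0 ≤ ∑ j, ∑ t, (inner ℝ (u j) (c t)) ^ 2 :=
    Finset.sum_nonneg fun _ _ => Finset.sum_nonneg fun _ _ => sq_nonneg _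
  calc _ ≤ ((Finset.univ : Finset (Fin (Module.finrank ℝ W))).card : ℝ) *
        ∑ j, (∑ t, inner ℝ (u j) (c t) * (u j : EuclideanSpace ℝ ι) t) ^ 2 :=
        sq_sum_le_card_mul_sum_sq
    _ ≤ ((Finset.univ : Finset (Fin (Module.finrank ℝ W))).card : ℝ) *
        ∑ j, ∑ t, (inner ℝ (u j) (c t)) ^ 2 := by
        gcongr with j
        refine (Finset.sum_mul_sq_le_sq_mul_sq _ _ _).trans ?_
        rw [hu j, mul_one]
    _ ≤ _ := by
        gcongr
        simpa using hk

/-- Weighted version. -/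
lemma trace_sq_le_weighted {ι : Type*} [Fintype ι] {d : ℕ} (p : ι → ℝ) (hp : ∀ s, 0 ≤ p s)
    (B C : ι → Fin d → ℝ) :
    (∑ s, p s * ∑ i, B s i * C s i) ^ 2 ≤
      (d : ℝ) * ∑ s, ∑ t, p s * p t * (∑ i, B s i * C t i) ^ 2 := by
  have h := trace_sq_le_aux (fun s i => √(p s) * B s i) (fun s i => √(p s) * C s i)
  have e : ∀ s t, ∑ i, √(p s) * B s i * (√(p t) * C t i) =
      √(p s) * √(p t) * ∑ i, B s i * C t i := by
    intro s t
    rw [Finset.mul_sum]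
    exact Finset.sum_congr rfl fun i _ => by ring
  simp only [e, mul_pow, Real.sq_sqrt (hp _), Real.mul_self_sqrt (hp _)] at h
  exact h

/-- Finite Donsker-Varadhan, one-sided. -/
lemma dv_aux {𝒴 : Type*} [Fintype 𝒴] (q r f : 𝒴 → ℝ) (ps c : ℝ) (hps : 0 < ps)
    (hq : ∀ y, 0 ≤ q y) (hqr : ∀ y, q y ≤ r y) (hsum : ∑ y, q y = ps)
    (hexp : ∑ y, r y * exp (f y) ≤ exp c) :
    ∑ y, q y * f y - ps * c ≤ ∑ y, q y * log (q y / (ps * r y)) := by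
  have hterm : ∀ y, q y * (f y - c) - q y * log (q y / (ps * r y)) ≤
      ps * exp (-c) * (r y * exp (f y)) - q y := by
    intro y
    rcases (hq y).eq_or_lt with h | h
    · have := hqr y
      rw [← h] at this ⊢
      simp only [zero_mul, sub_zero]
      positivity
    · have hr : 0 < r y := h.trans_le (hqr y)
      have h1 : log (ps * r y * exp (f y - c) / q y) ≤ ps * r y * exp (f y - c) / q y - 1 :=
        log_le_sub_one_of_pos (by positivity)
      have h2 : log (ps * r y * exp (f y - c) / q y) =
          (f y - c) - log (q y / (ps * r y)) := by
        rw [log_div (by positivity) h.ne', log_mul (by positivity) (by positivity), log_exp,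
          log_div h.ne' (by positivity)]
        ring
      rw [h2] at h1
      have h3 := mul_le_mul_of_nonneg_left h1 h.le
      have h4 : q y * (ps * r y * exp (f y - c) / q y - 1) =
          ps * exp (-c) * (r y * exp (f y)) - q y := by
        rw [sub_eq_add_neg (f y), exp_add]
        field_simp
      rw [h4] at h3
      linarith
  have hs := Finset.sum_le_sum (s := Finset.univ) fun y _ => hterm y
  simp only [Finset.sum_sub_distrib, mul_sub, ← Finset.mul_sum, ← Finset.sum_mul, hsum] at hs
  have h5 : ps * exp (-c) * ∑ y, r y * exp (f y) ≤ ps * exp (-c) * exp c := by gcongr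
  rw [mul_assoc ps, mul_assoc ps, ← exp_add] at h5
  simp only [neg_add_cancel, exp_zero, mul_one] at h5
  rw [← mul_assoc] at h5
  linarith

lemma subG_aux {ps σ D K : ℝ} (hps : 0 < ps)
    (h : ∀ l : ℝ, l * (ps * D) - ps * (l ^ 2 * σ ^ 2 / 2) ≤ K) :
    ps * D ^ 2 ≤ 2 * σ ^ 2 * K := by
  by_cases hσ : σ = 0
  · subst hσ
    by_cases hD : D = 0
    · simp [hD]
    · have := h ((K + 1) / (ps * D))
      rw [div_mul_cancel₀ _ (by positivity)] at this
      simp at this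
      linarith
  · have := h (D / σ ^ 2)
    have hs : 0 < σ ^ 2 := by positivity
    have e : D / σ ^ 2 * (ps * D) - ps * ((D / σ ^ 2) ^ 2 * σ ^ 2 / 2) =
        ps * D ^ 2 / (2 * σ ^ 2) := by
      field_simp
      ring
    rw [e, div_le_iff₀ (by positivity)] at this
    linarith

lemma integral_fin_aux {Ω : Type*} [MeasurableSpace Ω] (μ : Measure Ω) [IsFiniteMeasure μ]
    {𝒵 : Type*} [Fintype 𝒵] [MeasurableSpace 𝒵] [MeasurableSingletonClass 𝒵]
    (Z : Ω → 𝒵) (hZ : Measurable Z) (f : 𝒵 → ℝ) :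
    ∫ ω, f (Z ω) ∂μ = ∑ z, (μ {ω | Z ω = z}).toReal * f z := by
  have hf : Measurable f := measurable_of_finite f
  rw [← integral_map (φ := Z) hZ.aemeasurable hf.aestronglyMeasurable,
    integral_fintype Integrable.of_finite]
  refine Finset.sum_congr rfl fun z _ => ?_
  rw [Measure.real, Measure.map_apply hZ (measurableSet_singleton z), smul_eq_mul]
  rfl

/-- **Corollary 1, linear bandit case** (sub-Gaussian analogue of
Proposition 5). If for each action the centered reward is `σ`-sub-Gaussian, the
action set `𝒜` is a finite subset of `ℝ^d` and the conditional mean rewards are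
linear, then under Thompson sampling
`(E[R(Y_{A*}) − R(Y_A)])² ≤ 2 d σ² · I(A*; (A, Y_A))`. -/
theorem information_ratio_le_subGaussian_linear
    {Ω : Type*} [MeasurableSpace Ω] (μ : Measure Ω) [IsProbabilityMeasure μ]
    {d : ℕ} (𝒜 : Finset (Fin d → ℝ)) (h𝒜 : 𝒜.Nonempty)
    {𝒴 : Type*} [Fintype 𝒴] [Nonempty 𝒴]
    [MeasurableSpace 𝒴] [MeasurableSingletonClass 𝒴]
    (Y : ↥𝒜 → Ω → 𝒴) (Astar A : Ω → ↥𝒜) (R : 𝒴 → ℝ)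
    (σ : ℝ) (hσ : 0 ≤ σ)
    (hsub : ∀ (a : ↥𝒜) (l : ℝ),
      ∫ ω, Real.exp (l * (R (Y a ω) - ∫ ω', R (Y a ω') ∂μ)) ∂μ ≤
        Real.exp (l ^ 2 * σ ^ 2 / 2))
    (hYmeas : ∀ a, Measurable (Y a)) (hAstarMeas : Measurable Astar)
    (hAMeas : Measurable A)
    (hmatch : ∀ a : ↥𝒜, μ {ω | A ω = a} = μ {ω | Astar ω = a})
    (hindep : IndepFun A (fun ω => (Astar ω, fun a => Y a ω)) μ)
    (μlin : ↥𝒜 → (Fin d → ℝ))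
    (hlin : ∀ (a astar : ↥𝒜), μ {ω | Astar ω = astar} ≠ 0 →
      ∫ ω, R (Y a ω) ∂(μ[|{ω | Astar ω = astar}]) =
        ∑ i, (a : Fin d → ℝ) i * μlin astar i)
    (hlinMean : ∀ a : ↥𝒜,
      ∫ ω, R (Y a ω) ∂μ =
        ∑ i, (a : Fin d → ℝ) i *
          (∑ astar : ↥𝒜, (μ {ω | Astar ω = astar}).toReal * μlin astar i)) :
    (∫ ω, (R (Y (Astar ω) ω) - R (Y (A ω) ω)) ∂μ) ^ 2 ≤
      2 * (d : ℝ) * σ ^ 2 *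
        mutualInfo μ Astar (fun ω => (A ω, Y (A ω) ω)) := by
  classical
  -- notation
  set p : ↥𝒜 → ℝ := fun a => (μ {ω | Astar ω = a}).toReal with hp
  set q : ↥𝒜 → ↥𝒜 → 𝒴 → ℝ := fun a s y => (μ {ω | Astar ω = s ∧ Y a ω = y}).toReal with hq
  set r : ↥𝒜 → 𝒴 → ℝ := fun a y => (μ {ω | Y a ω = y}).toReal with hr
  have hp0 : ∀ a, 0 ≤ p a := fun a => ENNReal.toReal_nonneg
  have hq0 : ∀ a s y, 0 ≤ q a s y := fun a s y => ENNReal.toReal_nonneg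
  have hqr : ∀ a s y, q a s y ≤ r a y := fun a s y =>
    ENNReal.toReal_mono (measure_ne_top _ _) (measure_mono fun ω h => h.2)
  have hqp : ∀ a s y, q a s y ≤ p s := fun a s y =>
    ENNReal.toReal_mono (measure_ne_top _ _) (measure_mono fun ω h => h.1)
  have hSm : ∀ s, MeasurableSet {ω | Astar ω = s} := fun s =>
    hAstarMeas (measurableSet_singleton s)
  have hYm : ∀ a y, MeasurableSet {ω | Y a ω = y} := fun a y =>
    hYmeas a (measurableSet_singleton y)
  have hsel : ∀ T : Ω → ↥𝒜, Measurable T → Measurable (fun ω => Y (T ω) ω) := by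
    intro T hT
    have : Measurable (fun x : ↥𝒜 × Ω => Y x.1 x.2) :=
      measurable_from_prod_countable_right fun a => hYmeas a
    exact this.comp (hT.prodMk measurable_id)
  have hsumq : ∀ a s, ∑ y, q a s y = p s := by
    intro a s
    have h := integral_fin_aux (μ.restrict {ω | Astar ω = s}) (Y a) (hYmeas a) (fun _ => 1)
    simp only [integral_const, smul_eq_mul, mul_one] at h
    rw [measureReal_restrict_apply_univ] at h
    simp only [hp, hq]
    rw [← Measure.real, h]
    refine Finset.sum_congr rfl fun y _ => ?_
    rw [Measure.restrict_apply (hYm a y)]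
    congr 2
    ext ω
    simp [and_comm]
  have hsumr : ∀ (a) (f : 𝒴 → ℝ), ∫ ω, f (Y a ω) ∂μ = ∑ y, r a y * f y := fun a f =>
    integral_fin_aux μ (Y a) (hYmeas a) f
  have hcoord : ∀ a y, MeasurableSet {x : ↥𝒜 × (↥𝒜 → 𝒴) | x.2 a = y} := by
    intro a y
    have h : Measurable (fun x : ↥𝒜 × (↥𝒜 → 𝒴) => x.2 a) :=
      (measurable_pi_apply a).comp measurable_snd
    exact h (measurableSet_singleton y)
  -- independence
  have hind : ∀ a s y, (μ {ω | Astar ω = s ∧ (A ω, Y (A ω) ω) = (a, y)}).toReal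
      = p a * q a s y := by
    intro a s y
    have h := hindep.measure_inter_preimage_eq_mul {a}
      {x : ↥𝒜 × (↥𝒜 → 𝒴) | x.1 = s ∧ x.2 a = y} (measurableSet_singleton a)
      ((measurable_fst (measurableSet_singleton s)).inter
        (hcoord a y))
    have e : {ω | Astar ω = s ∧ (A ω, Y (A ω) ω) = (a, y)} =
        A ⁻¹' {a} ∩ (fun ω => (Astar ω, fun a => Y a ω)) ⁻¹'
          {x : ↥𝒜 × (↥𝒜 → 𝒴) | x.1 = s ∧ x.2 a = y} := by
      ext ω
      simp only [Set.mem_ofPred_eq, Prod.mk.injEq, Set.mem_inter_iff, Set.mem_preimage,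
        Set.mem_singleton_iff]
      constructor
      · rintro ⟨h1, h2, h3⟩
        subst h2
        exact ⟨rfl, h1, h3⟩
      · rintro ⟨h2, h1, h3⟩
        subst h2
        exact ⟨h1, rfl, h3⟩
    rw [e, h, ENNReal.toReal_mul]
    congr 1
    exact congrArg ENNReal.toReal (hmatch a)
  have hind2 : ∀ a y, (μ {ω | (A ω, Y (A ω) ω) = (a, y)}).toReal = p a * r a y := by
    intro a y
    have h := hindep.measure_inter_preimage_eq_mul {a}
      {x : ↥𝒜 × (↥𝒜 → 𝒴) | x.2 a = y} (measurableSet_singleton a)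
      (hcoord a y)
    have e : {ω | (A ω, Y (A ω) ω) = (a, y)} =
        A ⁻¹' {a} ∩ (fun ω => (Astar ω, fun a => Y a ω)) ⁻¹'
          {x : ↥𝒜 × (↥𝒜 → 𝒴) | x.2 a = y} := by
      ext ω
      simp only [Set.mem_ofPred_eq, Prod.mk.injEq, Set.mem_inter_iff, Set.mem_preimage,
        Set.mem_singleton_iff]
      constructor
      · rintro ⟨h2, h3⟩
        subst h2
        exact ⟨rfl, h3⟩
      · rintro ⟨h2, h3⟩
        subst h2
        exact ⟨rfl, h3⟩
    rw [e, h, ENNReal.toReal_mul]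
    congr 1
    exact congrArg ENNReal.toReal (hmatch a)
  -- means
  set m : Fin d → ℝ := fun i => ∑ s, p s * μlin s i with hm
  set D : ↥𝒜 → ↥𝒜 → ℝ := fun s a => ∑ i, (μlin s i - m i) * (a : Fin d → ℝ) i with hD
  have hmean : ∀ a, ∑ y, r a y * R y = ∑ i, (a : Fin d → ℝ) i * m i := by
    intro a
    rw [← hsumr, hlinMean a]
  have hcond : ∀ a s, ∑ y, q a s y * R y = p s * ∑ i, (a : Fin d → ℝ) i * μlin s i := by
    intro a s
    by_cases h0 : μ {ω | Astar ω = s} = 0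
    · have hps : p s = 0 := by simp [hp, h0]
      have : ∀ y, q a s y = 0 := fun y => le_antisymm (hps ▸ hqp a s y) (hq0 a s y)
      simp [this, hps]
    · have hpp : p s ≠ 0 := by
        simp only [hp]
        exact (ENNReal.toReal_pos h0 (measure_ne_top _ _)).ne'
      have := cond_isProbabilityMeasure h0
      rw [← hlin a s h0, integral_fin_aux _ (Y a) (hYmeas a) R, Finset.mul_sum]
      refine Finset.sum_congr rfl fun y _ => ?_
      rw [cond_apply (hSm s), ENNReal.toReal_mul, ENNReal.toReal_inv, ← mul_assoc, ← mul_assoc]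
      change q a s y * R y = p s * (p s)⁻¹ * q a s y * R y
      rw [mul_inv_cancel₀ hpp, one_mul]
  have hDe : ∀ s a, p s * D s a = ∑ y, q a s y * R y - p s * ∑ y, r a y * R y := by
    intro s a
    rw [hcond, hmean, ← mul_sub, ← Finset.sum_sub_distrib]
    simp only [hD]
    congr 1
    exact Finset.sum_congr rfl fun i _ => by ring
  -- regret
  have hreg : ∫ ω, (R (Y (Astar ω) ω) - R (Y (A ω) ω)) ∂μ = ∑ s, p s * D s s := by
    have hint : ∀ T : Ω → ↥𝒜, Measurable T → Integrable (fun ω => R (Y (T ω) ω)) μ := by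
      intro T hT
      have h1 : Integrable R (μ.map (fun ω => Y (T ω) ω)) := Integrable.of_finite
      exact h1.comp_measurable (hsel T hT)
    rw [integral_sub (hint _ hAstarMeas) (hint _ hAMeas)]
    have h1 := integral_fin_aux μ (fun ω => (Astar ω, Y (Astar ω) ω))
      (hAstarMeas.prodMk (hsel _ hAstarMeas)) (fun z => R z.2)
    have h2 := integral_fin_aux μ (fun ω => (A ω, Y (A ω) ω))
      (hAMeas.prodMk (hsel _ hAMeas)) (fun z => R z.2)
    rw [Fintype.sum_prod_type] at h1 h2
    simp only at h1 h2
    rw [h1, h2, ← Finset.sum_sub_distrib]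
    refine Finset.sum_congr rfl fun s _ => ?_
    rw [hDe, Finset.mul_sum]
    congr 1
    · refine Finset.sum_congr rfl fun y _ => ?_
      simp only [hq]
      congr 3
      ext ω
      simp only [Set.mem_ofPred_eq, Prod.mk.injEq]
      constructor
      · rintro ⟨h2, h3⟩
        subst h2
        exact ⟨rfl, h3⟩
      · rintro ⟨h2, h3⟩
        subst h2
        exact ⟨rfl, h3⟩
    · refine Finset.sum_congr rfl fun y _ => ?_
      rw [hind2, mul_assoc]
  -- mutual information
  set K : ↥𝒜 → ↥𝒜 → ℝ := fun s a => ∑ y, q a s y * log (q a s y / (p s * r a y)) with hK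
  have hMI : mutualInfo μ Astar (fun ω => (A ω, Y (A ω) ω)) = ∑ s, ∑ a, p a * K s a := by
    unfold mutualInfo
    refine Finset.sum_congr rfl fun s _ => ?_
    rw [Fintype.sum_prod_type]
    refine Finset.sum_congr rfl fun a _ => ?_
    simp only [hK]
    rw [Finset.mul_sum]
    refine Finset.sum_congr rfl fun y _ => ?_
    rw [hind, hind2]
    change p a * q a s y * log (p a * q a s y / (p s * (p a * r a y))) = _
    by_cases hpa : p a = 0
    · simp [hpa]
    · rw [mul_left_comm (p s), mul_div_mul_left _ _ hpa, mul_assoc]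
  have hKD : ∀ s a, p s * D s a ^ 2 ≤ 2 * σ ^ 2 * K s a := by
    intro s a
    rcases (hp0 s).eq_or_lt with h | h
    · have : ∀ y, q a s y = 0 := fun y => le_antisymm (h ▸ hqp a s y) (hq0 a s y)
      simp [hK, this, ← h]
    · refine subG_aux h fun l => ?_
      have h1 := hsub a l
      rw [hsumr a R, hsumr a (fun y => exp (l * (R y - ∑ y, r a y * R y)))] at h1
      have h2 := dv_aux (q a s) (r a) (fun y => l * (R y - ∑ y, r a y * R y)) (p s)
        (l ^ 2 * σ ^ 2 / 2) h (hq0 a s) (hqr a s) (hsumq a s) h1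
      have h3 : ∑ y, q a s y * (l * (R y - ∑ y, r a y * R y)) = l * (p s * D s a) := by
        rw [hDe, ← hsumq a s, Finset.sum_mul, ← Finset.sum_sub_distrib, Finset.mul_sum]
        exact Finset.sum_congr rfl fun y _ => by ring
      rw [h3] at h2
      exact h2
  rw [hreg, hMI]
  have ht := trace_sq_le_weighted p hp0 (fun s i => μlin s i - m i)
    (fun a i => (a : Fin d → ℝ) i)
  refine ht.trans ?_
  have : 2 * (d : ℝ) * σ ^ 2 * ∑ s, ∑ a, p a * K s a =
      (d : ℝ) * ∑ s, ∑ a, p a * (2 * σ ^ 2 * K s a) := by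
    simp only [Finset.mul_sum]
    exact Finset.sum_congr rfl fun s _ => Finset.sum_congr rfl fun a _ => by ring
  rw [this]
  refine mul_le_mul_of_nonneg_left ?_ (Nat.cast_nonneg d)
  refine Finset.sum_le_sum fun s _ => Finset.sum_le_sum fun a _ => ?_
  have h := mul_le_mul_of_nonneg_left (hKD s a) (hp0 a)
  calc _ = p a * (p s * D s a ^ 2) := by simp only [hD]; ring
    _ ≤ _ := h
end

section
/- Assume full information: there is a finite set 𝒵 and random variables Z_t : Ω → 𝒵 such that 𝒴 = 𝒜 × 𝒵 and Y_{t,a} = (a, Z_t) for every t ≥ 1 and a ∈ 𝒜. Then the expected regret of Thompson sampling satisfies Σ_{t=1}^{T} E[ R(Y_{t,A*}) − R(Y_{t,A_t}) ] ≤ √( H(A*) · T / 2 ). -/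
open MeasureTheory ProbabilityTheory Real

/-- Shannon entropy of a random variable `X` with values in a finite set,
under the measure `μ`. -/
noncomputable def entropy {Ω : Type*} [MeasurableSpace Ω] (μ : Measure Ω)
    {𝒳 : Type*} [Fintype 𝒳] (X : Ω → 𝒳) : ℝ :=
  ∑ x : 𝒳, Real.negMulLog (μ {ω | X ω = x}).toReal

/-- Hoeffding's lemma for finitely supported weights. -/
lemma ts_hoeffding_fin {W : Type*} [Fintype W] (P : W → ℝ) (hP : ∀ w, 0 ≤ P w)
    (hP1 : ∑ w, P w = 1) (f : W → ℝ) (m : ℝ) (hf : ∀ w, f w ∈ Set.Icc m (m + 1)) (l : ℝ) :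
    ∑ w, P w * Real.exp (l * (f w - ∑ w', P w' * f w')) ≤ Real.exp (l ^ 2 / 8) := by
  classical
  let _ : MeasurableSpace W := ⊤
  have : MeasurableSingletonClass W := ⟨fun _ => trivial⟩
  have hsum : ∑ w, ENNReal.ofReal (P w) = 1 := by
    rw [← ENNReal.ofReal_sum_of_nonneg (fun w _ => hP w), hP1, ENNReal.ofReal_one]
  let pm : PMF W := PMF.ofFintype (fun w => ENNReal.ofReal (P w)) hsum
  have hint : ∀ g : W → ℝ, ∫ w, g w ∂pm.toMeasure = ∑ w, P w * g w := by
    intro g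
    rw [PMF.integral_eq_sum]
    refine Finset.sum_congr rfl fun w _ => ?_
    simp [pm, PMF.ofFintype_apply, ENNReal.toReal_ofReal (hP w)]
  have h := (hasSubgaussianMGF_of_mem_Icc (μ := pm.toMeasure) (X := f) (a := m) (b := m + 1)
    (measurable_of_finite f).aemeasurable (Filter.Eventually.of_forall hf)).mgf_le l
  rw [mgf, hint, hint] at h
  refine h.trans (le_of_eq ?_)
  congr 1
  simp
  ring

lemma ts_info_le {X W : Type*} [Fintype X] [Fintype W] (q : X → W → ℝ)
    (hq : ∀ a w, 0 ≤ q a w) (f : X → W → ℝ) (m : ℝ)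
    (hf : ∀ a w, f a w ∈ Set.Icc m (m + 1)) (l : ℝ) :
    l * (∑ a, ∑ w, q a w * f a w) -
      l * (∑ a, (∑ w, q a w) * (∑ w, (∑ a', q a' w) / (∑ a', ∑ w', q a' w') * f a w)) ≤
    l ^ 2 / 8 * (∑ a, ∑ w, q a w) +
      ((∑ a, ∑ w, q a w * Real.log (q a w)) -
        ∑ w, (∑ a, q a w) * Real.log (∑ a, q a w)) -
      ((∑ a, (∑ w, q a w) * Real.log (∑ w, q a w)) -
        (∑ a, ∑ w, q a w) * Real.log (∑ a, ∑ w, q a w)) := by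
  classical
  set Q := ∑ a, ∑ w, q a w with hQ
  have hQ0 : 0 ≤ Q := Finset.sum_nonneg fun a _ => Finset.sum_nonneg fun w _ => hq a w
  have hrow : ∀ a, 0 ≤ ∑ w, q a w := fun a => Finset.sum_nonneg fun w _ => hq a w
  have hcol : ∀ w, 0 ≤ ∑ a, q a w := fun w => Finset.sum_nonneg fun a _ => hq a w
  rcases hQ0.eq_or_lt with h0 | hpos
  · have hz : ∀ a w, q a w = 0 := by
      intro a w
      have h1 := (Finset.sum_eq_zero_iff_of_nonneg (fun a _ => hrow a)).1 (hQ.symm.trans h0.symm) a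
        (Finset.mem_univ _)
      exact (Finset.sum_eq_zero_iff_of_nonneg (fun w _ => hq a w)).1 h1 w (Finset.mem_univ _)
    rw [← h0]
    simp [hz]
  · set r : X → ℝ := fun a => ∑ w, q a w with hr
    set c : W → ℝ := fun w => ∑ a, q a w with hc
    set E : X → ℝ := fun a => ∑ w, c w / Q * f a w with hE
    have hcQ : ∑ w, c w = Q := by rw [hQ, Finset.sum_comm]
    have hP1 : ∑ w, c w / Q = 1 := by
      rw [← Finset.sum_div, hcQ, div_self hpos.ne']
    have hH : ∀ a, ∑ w, c w / Q * Real.exp (l * (f a w - E a)) ≤ Real.exp (l ^ 2 / 8) :=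
      fun a => ts_hoeffding_fin (fun w => c w / Q) (fun w => div_nonneg (hcol w) hQ0) hP1
        (f a) m (hf a) l
    have hpt : ∀ a w, q a w * (l * (f a w - E a) - l ^ 2 / 8 - Real.log (q a w) - Real.log Q
        + Real.log (r a) + Real.log (c w)) ≤
        r a * (c w / Q * Real.exp (l * (f a w - E a))) * Real.exp (-(l ^ 2 / 8)) - q a w := by
      intro a w
      rcases (hq a w).eq_or_lt with h | h
      · rw [← h]
        have := hrow a
        have := hcol w
        simp only [zero_mul, sub_zero]
        positivity
      · have hra : 0 < r a := h.trans_le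
          (Finset.single_le_sum (fun w _ => hq a w) (Finset.mem_univ w))
        have hcw : 0 < c w := h.trans_le
          (Finset.single_le_sum (f := fun a => q a w) (fun a _ => hq a w) (Finset.mem_univ a))
        have hx : 0 < r a * (c w / Q * Real.exp (l * (f a w - E a))) * Real.exp (-(l ^ 2 / 8))
          / q a w := by positivity
        have hlog := Real.log_le_sub_one_of_pos hx
        rw [Real.log_div (by positivity) h.ne', Real.log_mul (by positivity) (by positivity),
          Real.log_mul (by positivity) (by positivity), Real.log_mul (by positivity) (by positivity),
          Real.log_div (by positivity) (by positivity), Real.log_exp, Real.log_exp] at hlog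
        have h2 := mul_le_mul_of_nonneg_left hlog h.le
        rw [mul_sub (q a w) (_ / _) 1, mul_div_cancel₀ _ h.ne', mul_one] at h2
        refine le_trans (le_of_eq ?_) h2
        ring
    have hs : ∑ a, ∑ w, q a w * (l * (f a w - E a) - l ^ 2 / 8 - Real.log (q a w) - Real.log Q
        + Real.log (r a) + Real.log (c w)) ≤ 0 := by
      calc _ ≤ ∑ a, ∑ w, (r a * (c w / Q * Real.exp (l * (f a w - E a))) *
              Real.exp (-(l ^ 2 / 8)) - q a w) :=
            Finset.sum_le_sum fun a _ => Finset.sum_le_sum fun w _ => hpt a w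
        _ = ∑ a, (r a * (∑ w, c w / Q * Real.exp (l * (f a w - E a))) *
              Real.exp (-(l ^ 2 / 8)) - r a) := by
            refine Finset.sum_congr rfl fun a _ => ?_
            rw [Finset.sum_sub_distrib, Finset.mul_sum, Finset.sum_mul]
        _ ≤ ∑ a : X, (0 : ℝ) := by
            refine Finset.sum_le_sum fun a _ => ?_
            have h1 := mul_le_mul_of_nonneg_left (hH a)
              (mul_nonneg (hrow a) (Real.exp_pos (-(l ^ 2 / 8))).le)
            rw [mul_assoc _ _ (Real.exp (l ^ 2 / 8)), ← Real.exp_add, neg_add_cancel, Real.exp_zero,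
              mul_one] at h1
            have : r a = ∑ w, q a w := rfl
            rw [← this] at h1
            linarith
        _ = 0 := by simp
    have e1 : ∑ a, ∑ w, q a w * (l * (f a w - E a) - l ^ 2 / 8 - Real.log (q a w) - Real.log Q
        + Real.log (r a) + Real.log (c w)) =
        l * (∑ a, ∑ w, q a w * f a w) - l * (∑ a, r a * E a) - l ^ 2 / 8 * Q
        - (∑ a, ∑ w, q a w * Real.log (q a w)) - Q * Real.log Q
        + (∑ a, r a * Real.log (r a)) + ∑ w, c w * Real.log (c w) := by
      have e2 : ∑ w, c w * Real.log (c w) = ∑ a, ∑ w, q a w * Real.log (c w) := by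
        rw [Finset.sum_comm]
        exact Finset.sum_congr rfl fun w _ => Finset.sum_mul _ _ _
      rw [e2]
      have e3 : ∀ g : X → ℝ, ∑ a, r a * g a = ∑ a, ∑ w, q a w * g a := fun g =>
        Finset.sum_congr rfl fun a _ => Finset.sum_mul _ _ _
      have e4 : ∀ k : ℝ, Q * k = ∑ a, ∑ w, q a w * k := fun k => by
        rw [← e3, hQ, Finset.sum_mul]
      rw [e3, e3, mul_comm (l ^ 2 / 8) Q, e4, e4]
      simp only [Finset.mul_sum]
      simp only [← Finset.sum_sub_distrib, ← Finset.sum_add_distrib]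
      exact Finset.sum_congr rfl fun a _ => Finset.sum_congr rfl fun w _ => by ring
    rw [e1] at hs
    linarith

/-- Minus the conditional entropy of the second coordinate given the first. -/
noncomputable def tsPot {S X : Type*} [Fintype S] [Fintype X] (G : S → X → ℝ) : ℝ :=
  (∑ s, ∑ a, G s a * Real.log (G s a)) - ∑ s, (∑ a, G s a) * Real.log (∑ a, G s a)

lemma tsPot_nonpos {S X : Type*} [Fintype S] [Fintype X] (G : S → X → ℝ)
    (hG : ∀ s a, 0 ≤ G s a) : tsPot G ≤ 0 := by
  unfold tsPot
  rw [← Finset.sum_sub_distrib]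
  refine Finset.sum_nonpos fun s _ => ?_
  rw [Finset.sum_mul, ← Finset.sum_sub_distrib]
  refine Finset.sum_nonpos fun a _ => ?_
  rcases (hG s a).eq_or_lt with h | h
  · simp [← h]
  · have : G s a ≤ ∑ a, G s a := Finset.single_le_sum (fun a _ => hG s a) (Finset.mem_univ a)
    have := mul_le_mul_of_nonneg_left (Real.log_le_log h this) h.le
    linarith

lemma ts_sum_snoc {W : Type*} [Fintype W] (t : ℕ) (F : (Fin (t + 1) → W) → ℝ) :
    ∑ h, F h = ∑ h : Fin t → W, ∑ w, F (Fin.snoc (α := fun _ => W) h w) := by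
  rw [← (Fin.snocEquiv (fun _ : Fin (t + 1) => W)).sum_comp, Fintype.sum_prod_type,
    Finset.sum_comm]
  rfl

lemma ts_step {X V : Type*} [Fintype X] [Fintype V] (R : X × V → ℝ) (m : ℝ)
    (hR : ∀ y, R y ∈ Set.Icc m (m + 1)) (t : ℕ)
    (G : (Fin t → X × V) → X → ℝ) (G' : (Fin (t + 1) → X × V) → X → ℝ)
    (hG' : ∀ h a, 0 ≤ G' h a)
    (hcons : ∀ h a, ∑ w, G' (Fin.snoc (α := fun _ => X × V) h w) a = G h a)
    (htot : ∑ h, ∑ a, G h a = 1)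
    (hTS : ∀ h b z, (∑ a, G' (Fin.snoc (α := fun _ => X × V) h (b, z)) a) * (∑ a, G h a) =
      G h b * ∑ b', ∑ a, G' (Fin.snoc (α := fun _ => X × V) h (b', z)) a) (l : ℝ) :
    l * (∑ h, ∑ a, ∑ w : X × V, G' (Fin.snoc (α := fun _ => X × V) h w) a *
      (R (a, w.2) - R w)) ≤ l ^ 2 / 8 + tsPot G' - tsPot G := by
  have key : ∀ h, l * (∑ a, ∑ w : X × V, G' (Fin.snoc (α := fun _ => X × V) h w) a *
      (R (a, w.2) - R w)) ≤ l ^ 2 / 8 * (∑ a, G h a) +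
      ((∑ a, ∑ w, G' (Fin.snoc (α := fun _ => X × V) h w) a *
          Real.log (G' (Fin.snoc (α := fun _ => X × V) h w) a)) -
        ∑ w, (∑ a, G' (Fin.snoc (α := fun _ => X × V) h w) a) *
          Real.log (∑ a, G' (Fin.snoc (α := fun _ => X × V) h w) a)) -
      ((∑ a, G h a * Real.log (G h a)) - (∑ a, G h a) * Real.log (∑ a, G h a)) := by
    intro h
    have h1 := ts_info_le (fun a w => G' (Fin.snoc (α := fun _ => X × V) h w) a)
      (fun a w => hG' _ _) (fun a w => R (a, w.2)) m (fun a w => hR _) l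
    simp only [hcons] at h1
    refine le_trans (le_of_eq ?_) h1
    rw [← mul_sub]
    congr 1
    simp only [mul_sub, Finset.sum_sub_distrib]
    congr 1
    rw [Finset.sum_comm]
    simp only [← Finset.sum_mul]
    set Q := ∑ a, G h a with hQ
    have hcQ : ∑ w, ∑ a, G' (Fin.snoc (α := fun _ => X × V) h w) a = Q := by
      rw [Finset.sum_comm, hQ]; simp only [hcons]
    have hc0 : ∀ w, 0 ≤ ∑ a, G' (Fin.snoc (α := fun _ => X × V) h w) a :=
      fun w => Finset.sum_nonneg fun a _ => hG' _ _
    by_cases h0 : Q = 0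
    · have hz : ∀ w, ∑ a, G' (Fin.snoc (α := fun _ => X × V) h w) a = 0 := fun w =>
        (Finset.sum_eq_zero_iff_of_nonneg (fun w _ => hc0 w)).1 (hcQ.trans h0) w (Finset.mem_univ _)
      simp [hz]
    · rw [Fintype.sum_prod_type]
      refine Finset.sum_congr rfl fun b _ => ?_
      rw [Fintype.sum_prod_type_right, Finset.mul_sum]
      refine Finset.sum_congr rfl fun z _ => ?_
      dsimp only
      rw [← Finset.sum_mul, ← Finset.sum_div, ← mul_assoc, ← mul_div_assoc, ← hTS h b z,
        mul_div_assoc, div_self h0, mul_one]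
  rw [Finset.mul_sum]
  refine (Finset.sum_le_sum fun h _ => key h).trans (le_of_eq ?_)
  unfold tsPot
  rw [ts_sum_snoc, ts_sum_snoc]
  simp only [Finset.sum_sub_distrib, Finset.sum_add_distrib, ← Finset.mul_sum, htot]
  have : ∀ h : Fin t → X × V, (∑ w, ∑ a, G' (Fin.snoc (α := fun _ => X × V) h w) a *
          Real.log (G' (Fin.snoc (α := fun _ => X × V) h w) a)) =
      ∑ a, ∑ w, G' (Fin.snoc (α := fun _ => X × V) h w) a *
          Real.log (G' (Fin.snoc (α := fun _ => X × V) h w) a) := fun h => Finset.sum_comm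
  simp only [this]
  ring

lemma ts_core {X V : Type*} [Fintype X] [Fintype V] (R : X × V → ℝ) (m : ℝ)
    (hR : ∀ y, R y ∈ Set.Icc m (m + 1))
    (G : ∀ t : ℕ, (Fin t → X × V) → X → ℝ)
    (hG : ∀ t h a, 0 ≤ G t h a)
    (hcons : ∀ t h a, ∑ w, G (t + 1) (Fin.snoc (α := fun _ => X × V) h w) a = G t h a)
    (htot : ∀ t, ∑ h, ∑ a, G t h a = 1)
    (hTS : ∀ t h b z,
      (∑ a, G (t + 1) (Fin.snoc (α := fun _ => X × V) h (b, z)) a) * (∑ a, G t h a) =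
      G t h b * ∑ b', ∑ a, G (t + 1) (Fin.snoc (α := fun _ => X × V) h (b', z)) a)
    (T : ℕ) (H : ℝ) (hH : H = ∑ a, Real.negMulLog (G 0 default a)) :
    ∑ t ∈ Finset.range T, (∑ h, ∑ a, ∑ w : X × V,
      G (t + 1) (Fin.snoc (α := fun _ => X × V) h w) a * (R (a, w.2) - R w)) ≤
      Real.sqrt (H * T / 2) := by
  set x := ∑ t ∈ Finset.range T, (∑ h, ∑ a, ∑ w : X × V,
      G (t + 1) (Fin.snoc (α := fun _ => X × V) h w) a * (R (a, w.2) - R w)) with hx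
  have h0 : tsPot (G 0) = - H := by
    have h1 := htot 0
    rw [Fintype.sum_unique] at h1
    unfold tsPot
    rw [Fintype.sum_unique (fun s : Fin 0 → X × V => ∑ a, G 0 s a * Real.log (G 0 s a)),
      Fintype.sum_unique (fun s : Fin 0 → X × V => (∑ a, G 0 s a) * Real.log (∑ a, G 0 s a)),
      h1, hH]
    simp [Real.negMulLog]
  have hl : ∀ l : ℝ, l * x ≤ l ^ 2 / 8 * T + H := by
    intro l
    rw [hx, Finset.mul_sum]
    have h1 : ∀ t, _ := fun t => ts_step R m hR t (G t) (G (t + 1)) (hG _) (hcons t) (htot t)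
      (hTS t) l
    refine (Finset.sum_le_sum fun t _ => h1 t).trans ?_
    simp only [add_sub_assoc]
    rw [Finset.sum_add_distrib, Finset.sum_range_sub (fun t => tsPot (G t)), h0]
    have := tsPot_nonpos (G T) (hG T)
    simp
    linarith
  rcases Nat.eq_zero_or_pos T with rfl | hT
  · simp [hx]
  · apply Real.le_sqrt_of_sq_le
    have hT' : (0 : ℝ) < T := by exact_mod_cast hT
    have h2 := hl (4 * x / T)
    have h3 : 4 * x / T * x * T ≤ ((4 * x / T) ^ 2 / 8 * T + H) * T :=
      mul_le_mul_of_nonneg_right h2 hT'.le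
    have e1 : 4 * x / T * x * T = 4 * x ^ 2 := by field_simp
    have e2 : ((4 * x / T) ^ 2 / 8 * T + H) * T = 2 * x ^ 2 + H * T := by field_simp; ring
    rw [e1, e2] at h3
    linarith

lemma ts_marg {Ω : Type*} [MeasurableSpace Ω] (μ : Measure Ω) [IsFiniteMeasure μ]
    {S : Type*} [Fintype S] [MeasurableSpace S] [MeasurableSingletonClass S]
    (V : Ω → S) (hV : Measurable V) (P : Ω → Prop) :
    ∑ s, μ.real {ω | P ω ∧ V ω = s} = μ.real {ω | P ω} := by
  have h := sum_measureReal_preimage_singleton (μ := μ.restrict {ω | P ω}) (Finset.univ : Finset S)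
    (f := V) (fun s _ => hV (measurableSet_singleton s))
  have h2 : (μ.restrict {ω | P ω}).real (V ⁻¹' ((Finset.univ : Finset S) : Set S)) =
      μ.real {ω | P ω} := by simp [Measure.real]
  rw [h2] at h
  rw [← h]
  refine Finset.sum_congr rfl fun s _ => ?_
  rw [Measure.real, Measure.real, Measure.restrict_apply (hV (measurableSet_singleton s)),
    Set.inter_comm]
  rfl

lemma ts_integral {Ω : Type*} [MeasurableSpace Ω] (μ : Measure Ω) [IsFiniteMeasure μ]
    {S : Type*} [Fintype S] [MeasurableSpace S] [MeasurableSingletonClass S]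
    (V : Ω → S) (hV : Measurable V) (F : S → ℝ) :
    ∫ ω, F (V ω) ∂μ = ∑ s, μ.real {ω | V ω = s} * F s := by
  rw [← integral_map (φ := V) (f := F) hV.aemeasurable
    (measurable_of_finite F).aestronglyMeasurable, integral_fintype (Integrable.of_finite)]
  refine Finset.sum_congr rfl fun s _ => ?_
  rw [smul_eq_mul, Measure.real, Measure.real, Measure.map_apply hV (measurableSet_singleton s)]
  rfl

/-- **Full-information regret bound for Thompson sampling**: combining
Proposition 1 with Proposition 4 yields, when `𝒴 = 𝒜 × 𝒵` and
`Y_{t,a} = (a, Z_t)` (full information),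
`Σ_{t<T} E[R(Y_{t,A*}) − R(Y_{t,A_t})] ≤ √(H(A*) · T / 2)`. -/
theorem thompson_sampling_regret_le_full_information
    {Ω : Type*} [MeasurableSpace Ω] (μ : Measure Ω) [IsProbabilityMeasure μ]
    {𝒜 𝒵 Θ : Type*} [Fintype 𝒜] [Nonempty 𝒜] [Fintype 𝒵] [Nonempty 𝒵]
    [Fintype Θ] [Nonempty Θ]
    [MeasurableSpace 𝒜] [MeasurableSingletonClass 𝒜]
    [MeasurableSpace 𝒵] [MeasurableSingletonClass 𝒵]
    [MeasurableSpace Θ] [MeasurableSingletonClass Θ]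
    (R : 𝒜 × 𝒵 → ℝ) (hR : (⨆ y, R y) - (⨅ y, R y) ≤ 1)
    (θstar : Ω → Θ) (hθstarMeas : Measurable θstar)
    (p : Θ → PMF (𝒜 → 𝒜 × 𝒵))
    (Y : ℕ → 𝒜 → Ω → 𝒜 × 𝒵) (hYmeas : ∀ t a, Measurable (Y t a))
    -- full information: a single random outcome `Z_t` is revealed whatever the action
    (Z : ℕ → Ω → 𝒵) (hfull : ∀ t a ω, Y t a ω = (a, Z t ω))
    -- conditionally i.i.d. given `θ*`, with conditional law `p θ*`
    (hiid : ∀ θ : Θ, μ {ω | θstar ω = θ} ≠ 0 →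
      ∀ (s : Finset ℕ) (f : ℕ → 𝒜 → 𝒜 × 𝒵),
        (μ[|{ω | θstar ω = θ}]) {ω | ∀ t ∈ s, (fun a => Y t a ω) = f t} =
          ∏ t ∈ s, p θ (f t))
    (Astar : Ω → 𝒜)
    -- `A*` is `σ(θ*)`-measurable
    (hAstarFn : ∃ g : Θ → 𝒜, ∀ ω, Astar ω = g (θstar ω))
    -- `A*` maximizes `E[R(Y_{1,a}) | θ*]`
    (hopt : ∀ θ : Θ, μ {ω | θstar ω = θ} ≠ 0 → ∀ ω ∈ {ω | θstar ω = θ},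
      ∀ a : 𝒜,
        ∫ ω', R (Y 0 a ω') ∂(μ[|{ω' | θstar ω' = θ}]) ≤
          ∫ ω', R (Y 0 (Astar ω) ω') ∂(μ[|{ω' | θstar ω' = θ}]))
    (A : ℕ → Ω → 𝒜) (hAmeas : ∀ t, Measurable (A t))
    -- Thompson sampling: conditioned on every positive-probability history,
    -- `A_t` is independent of `(θ*, Y_t)` and distributed as `A*`
    (hTS : ∀ (t : ℕ) (h : Fin t → 𝒜 × (𝒜 × 𝒵)),
      μ {ω | ∀ s : Fin t,
          A (s : ℕ) ω = (h s).1 ∧ Y (s : ℕ) ((h s).1) ω = (h s).2} ≠ 0 →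
        (∀ a : 𝒜,
          (μ[|{ω | ∀ s : Fin t,
              A (s : ℕ) ω = (h s).1 ∧ Y (s : ℕ) ((h s).1) ω = (h s).2}])
              {ω | A t ω = a} =
            (μ[|{ω | ∀ s : Fin t,
                A (s : ℕ) ω = (h s).1 ∧ Y (s : ℕ) ((h s).1) ω = (h s).2}])
              {ω | Astar ω = a}) ∧
        IndepFun (A t) (fun ω => (θstar ω, fun a => Y t a ω))
          (μ[|{ω | ∀ s : Fin t,
              A (s : ℕ) ω = (h s).1 ∧ Y (s : ℕ) ((h s).1) ω = (h s).2}]))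
    (T : ℕ) :
    ∑ t ∈ Finset.range T,
        ∫ ω, (R (Y t (Astar ω) ω) - R (Y t (A t ω) ω)) ∂μ ≤
      Real.sqrt (entropy μ Astar * T / 2) := by
  classical
  obtain ⟨g, hg⟩ := hAstarFn
  have hAs : Measurable Astar := by
    have : Astar = g ∘ θstar := funext hg
    rw [this]
    exact (measurable_of_finite g).comp hθstarMeas
  have hZ : ∀ t, Measurable (Z t) := by
    intro t
    have : Z t = Prod.snd ∘ Y t (Classical.arbitrary 𝒜) := by
      funext ω
      simp [hfull]
    rw [this]
    exact measurable_snd.comp (hYmeas t _)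
  let W : ℕ → Ω → 𝒜 × 𝒵 := fun t ω => (A t ω, Z t ω)
  have hW : ∀ t, Measurable (W t) := fun t => (hAmeas t).prodMk (hZ t)
  let hist : ∀ t : ℕ, Ω → (Fin t → 𝒜 × 𝒵) := fun t ω s => W s ω
  have hhist : ∀ t, Measurable (hist t) := fun t => measurable_pi_lambda _ fun s => hW s
  have hsnoc : ∀ t ω h w, hist (t + 1) ω = Fin.snoc (α := fun _ => 𝒜 × 𝒵) h w ↔
      hist t ω = h ∧ W t ω = w := by
    intro t ω h w
    have : hist (t + 1) ω = Fin.snoc (α := fun _ => 𝒜 × 𝒵) (hist t ω) (W t ω) := by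
      funext s
      refine Fin.lastCases ?_ (fun i => ?_) s
      · simp [hist]
      · simp [hist]
    rw [this, Fin.snoc_inj]
  let G : ∀ t : ℕ, (Fin t → 𝒜 × 𝒵) → 𝒜 → ℝ :=
    fun t h a => μ.real {ω | hist t ω = h ∧ Astar ω = a}
  have hGsum : ∀ t h, ∑ a, G t h a = μ.real {ω | hist t ω = h} := fun t h =>
    ts_marg μ Astar hAs (fun ω => hist t ω = h)
  have hG' : ∀ t h w a, G (t + 1) (Fin.snoc (α := fun _ => 𝒜 × 𝒵) h w) a =
      μ.real {ω | (hist t ω = h ∧ Astar ω = a) ∧ W t ω = w} := by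
    intro t h w a
    simp only [G, hsnoc]
    congr 1
    ext ω
    simp only [Set.mem_ofPred_eq]
    tauto
  have hfin := ts_core R (⨅ y, R y) (fun y => ⟨ciInf_le (Set.finite_range R).bddBelow y, by
      have := le_ciSup (Set.finite_range R).bddAbove y
      linarith⟩) G (fun t h a => measureReal_nonneg)
    (by
      intro t h a
      simp only [hG']
      exact ts_marg μ (W t) (hW t) _)
    (by
      intro t
      simp only [hGsum]
      have := ts_marg μ (hist t) (hhist t) (fun _ => True)
      simpa using this)
    (by
      intro t h b z
      simp only [hGsum, hsnoc]
      have e1 : ∑ b', μ.real {ω | hist t ω = h ∧ W t ω = (b', z)} =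
          μ.real {ω | hist t ω = h ∧ Z t ω = z} := by
        rw [← ts_marg μ (A t) (hAmeas t)]
        refine Finset.sum_congr rfl fun b' _ => ?_
        congr 1
        ext ω
        simp only [W, Prod.mk.injEq, Set.mem_ofPred_eq]
        tauto
      rw [e1]
      have hset : {ω | ∀ s : Fin t, A (s : ℕ) ω = (h s).1 ∧ Y (s : ℕ) ((h s).1) ω = h s} =
          {ω | hist t ω = h} := by
        ext ω
        simp only [Set.mem_ofPred_eq, hist, W, hfull, funext_iff, Prod.ext_iff]
        simp
      have hE : MeasurableSet {ω | hist t ω = h} := hhist t (measurableSet_singleton h)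
      by_cases h0 : μ {ω | hist t ω = h} = 0
      · have z1 : ∀ P : Ω → Prop, μ.real {ω | hist t ω = h ∧ P ω} = 0 := fun P => by
          rw [Measure.real, measure_mono_null (fun ω hω => hω.1) h0, ENNReal.toReal_zero]
        simp only [G, z1, zero_mul]
      · have hts := hTS t (fun s => ((h s).1, h s))
        simp only [hset] at hts
        obtain ⟨h1, h2⟩ := hts h0
        have h1b := h1 b
        rw [cond_apply hE, cond_apply hE] at h1b
        have h2b := (indepFun_iff_measure_inter_preimage_eq_mul.1 h2) {b}
          {y | y.2 = fun a => (a, z)} (measurableSet_singleton b) (Set.toFinite _).measurableSet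
        have p1 : (fun ω => (θstar ω, fun a => Y t a ω)) ⁻¹'
            {y : Θ × (𝒜 → 𝒜 × 𝒵) | y.2 = fun a => (a, z)} = {ω | Z t ω = z} := by
          ext ω
          simp [hfull, funext_iff]
        rw [p1, cond_apply hE, cond_apply hE, cond_apply hE] at h2b
        have p2 : A t ⁻¹' {b} = {ω | A t ω = b} := rfl
        rw [p2] at h2b
        have r1 := congrArg ENNReal.toReal h1b
        have r2 := congrArg ENNReal.toReal h2b
        simp only [ENNReal.toReal_mul, ENNReal.toReal_inv, ← Measure.real_def] at r1 r2
        have hQ : 0 < μ.real {ω | hist t ω = h} :=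
          ENNReal.toReal_pos h0 (measure_ne_top _ _)
        have s1 : {ω | hist t ω = h ∧ W t ω = (b, z)} =
            {ω | hist t ω = h} ∩ ({ω | A t ω = b} ∩ {ω | Z t ω = z}) := by
          ext ω
          simp [W]
        have s2 : {ω | hist t ω = h ∧ Z t ω = z} = {ω | hist t ω = h} ∩ {ω | Z t ω = z} := rfl
        have s3 : G t h b = μ.real ({ω | hist t ω = h} ∩ {ω | Astar ω = b}) := rfl
        rw [s1, s2, s3]
        rw [r1] at r2
        field_simp at r2
        linarith)
    T (entropy μ Astar) (by
      have e0 : ∀ ω, hist 0 ω = default := fun ω => Subsingleton.elim _ _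
      simp [entropy, G, e0, Measure.real])
  refine le_trans (le_of_eq ?_) hfin
  refine Finset.sum_congr rfl fun t _ => ?_
  have hi := ts_integral μ (fun ω => (hist t ω, Astar ω, W t ω))
    ((hhist t).prodMk (hAs.prodMk (hW t))) (fun v => R (v.2.1, v.2.2.2) - R v.2.2)
  simp only [W, hfull] at hi ⊢
  rw [hi]
  simp only [Fintype.sum_prod_type (α₁ := Fin t → 𝒜 × 𝒵), Fintype.sum_prod_type (α₁ := 𝒜) (α₂ := 𝒜 × 𝒵)]
  refine Finset.sum_congr rfl fun h _ => Finset.sum_congr rfl fun a _ =>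
    Finset.sum_congr rfl fun w _ => ?_
  rw [hG']
  congr 2
  ext ω
  simp only [Set.mem_ofPred_eq, Prod.mk.injEq, W]
  tauto
end
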